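/- arXiv:1608.05759 — 2 statements merged into one kernel-verified Lean document; each statement's English description precedes it below -/
import Mathlib

section
/- Let T = (G, P, L) be a canvas where P is a path of length one contained in the boundary C of the outer face of G. If 𝒞 is a non-empty collection of proper L-colorings of P, and P' is an edge of G with both ends in C, then Φ_T(P', 𝒞) is non-empty. -/
/-!
Common definitions: plane graphs (given by a concrete embedding in the plane),
outer face, canvases, list colorings, governments, harmonicas and coloring
harmonicas, following Postle–Thomas,
"Five-list-coloring graphs on surfaces III".
-/

open Set

universe u

/-- A finite simple graph together with an embedding in the plane:
each vertex gets a point, each edge a simple arc joining its endpoints;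
arcs avoid other vertices, and two distinct edges meet only in common
endpoints. -/
structure PlaneGraph (V : Type u) where
  verts : Set V
  Adj : V → V → Prop
  finite_verts : verts.Finite
  adj_symm : ∀ u v, Adj u v → Adj v u
  adj_irrefl : ∀ v, ¬Adj v v
  adj_mem : ∀ u v, Adj u v → u ∈ verts
  pos : V → ℝ × ℝ
  arc : Sym2 V → Set (ℝ × ℝ)
  pos_injOn : Set.InjOn pos verts
  arc_arc : ∀ u v, Adj u v → ∃ f : ℝ → ℝ × ℝ,
    ContinuousOn f (Set.Icc 0 1) ∧ Set.InjOn f (Set.Icc 0 1) ∧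
    f '' Set.Icc 0 1 = arc s(u, v) ∧ f 0 = pos u ∧ f 1 = pos v
  arc_avoid : ∀ u v, Adj u v → ∀ w ∈ verts, pos w ∈ arc s(u, v) → w = u ∨ w = v
  arc_meet : ∀ u v x y, Adj u v → Adj x y → s(u, v) ≠ s(x, y) →
    arc s(u, v) ∩ arc s(x, y) ⊆ pos '' (({u, v} : Set V) ∩ ({x, y} : Set V))

namespace PlaneGraph

variable {V : Type u}

/-- The point set of the drawing of the plane graph. -/
def image (G : PlaneGraph V) : Set (ℝ × ℝ) :=
  G.pos '' G.verts ∪ ⋃ (u : V) (v : V) (_ : G.Adj u v), G.arc s(u, v)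

/-- The outer (unbounded) face of the drawing. -/
def outerFace (G : PlaneGraph V) : Set (ℝ × ℝ) :=
  {p | p ∉ G.image ∧ ¬Bornology.IsBounded (connectedComponentIn G.imageᶜ p)}

/-- A vertex incident with (i.e. on the boundary of) the outer face. -/
def OnOuter (G : PlaneGraph V) (v : V) : Prop := G.pos v ∈ frontier G.outerFace

/-- An edge incident with (i.e. on the boundary of) the outer face. -/
def EdgeOnOuter (G : PlaneGraph V) (u v : V) : Prop :=
  G.arc s(u, v) ⊆ frontier G.outerFace

/-- The vertices of the boundary of the outer face. -/
def boundaryVerts (G : PlaneGraph V) : Set V := {v | v ∈ G.verts ∧ G.OnOuter v}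

/-- Connectivity of a plane graph. -/
def Connected (G : PlaneGraph V) : Prop :=
  G.verts.Nonempty ∧ ∀ u ∈ G.verts, ∀ v ∈ G.verts, Relation.ReflTransGen G.Adj u v

/-- `H` is a (plane) subgraph of `G`, drawn the same way. -/
def IsSubgraph (H G : PlaneGraph V) : Prop :=
  H.verts ⊆ G.verts ∧ (∀ u v, H.Adj u v → G.Adj u v) ∧
  (∀ v ∈ H.verts, H.pos v = G.pos v) ∧
  (∀ u v, H.Adj u v → H.arc s(u, v) = G.arc s(u, v))

/-- Delete a set of vertices (and all incident edges) from a plane graph. -/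
def deleteVerts (G : PlaneGraph V) (s : Set V) : PlaneGraph V where
  verts := G.verts \ s
  Adj u v := G.Adj u v ∧ u ∉ s ∧ v ∉ s
  finite_verts := G.finite_verts.subset Set.diff_subset
  adj_symm := fun u v h => ⟨G.adj_symm u v h.1, h.2.2, h.2.1⟩
  adj_irrefl := fun v h => G.adj_irrefl v h.1
  adj_mem := fun u v h => ⟨G.adj_mem u v h.1, h.2.1⟩
  pos := G.pos
  arc := G.arc
  pos_injOn := G.pos_injOn.mono Set.diff_subset
  arc_arc := fun u v h => G.arc_arc u v h.1
  arc_avoid := fun u v h w hw hm => G.arc_avoid u v h.1 w hw.1 hm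
  arc_meet := fun u v x y h h' hne => G.arc_meet u v x y h.1 h'.1 hne

/-- `G` has a proper coloring from the lists `L`. -/
def HasLColoring (G : PlaneGraph V) (L : V → Finset ℕ) : Prop :=
  ∃ φ : V → ℕ, (∀ v ∈ G.verts, φ v ∈ L v) ∧ ∀ u v, G.Adj u v → φ u ≠ φ v

/-- A vertex of degree exactly one. -/
def DegreeOne (G : PlaneGraph V) (x : V) : Prop :=
  (∃ a, G.Adj x a) ∧ ∀ a b, G.Adj x a → G.Adj x b → a = b

end PlaneGraph

/-- The cyclic successor of an index in a list. -/
def cycNext {V : Type u} (C : List V) (i : Fin C.length) : Fin C.length :=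
  ⟨((i : ℕ) + 1) % C.length, Nat.mod_lt _ (lt_of_le_of_lt (Nat.zero_le _) i.isLt)⟩

/-- The list `C` is a cycle of `G` whose image is exactly the boundary of the
outer face of `G`; i.e. `G` is a plane graph with outer cycle `C`. -/
def PlaneGraph.IsOuterCycle {V : Type u} (G : PlaneGraph V) (C : List V) : Prop :=
  C.Nodup ∧ 3 ≤ C.length ∧ (∀ v ∈ C, v ∈ G.verts) ∧
  (∀ i : Fin C.length, G.Adj (C.get i) (C.get (cycNext C i))) ∧
  frontier G.outerFace =
    G.pos '' {v | v ∈ C} ∪ ⋃ i : Fin C.length, G.arc s(C.get i, C.get (cycNext C i))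

/-- `pq` is an edge of the cycle (given as a list) `C`. -/
def IsCycleEdge {V : Type u} (C : List V) (p q : V) : Prop :=
  ∃ i : Fin C.length, s(p, q) = s(C.get i, C.get (cycNext C i))

/-- `(G, S, L)` is a canvas, where the subgraph `S` of the boundary of the
outer face of `G` is given by its vertex set `Sverts` and adjacency `SAdj`. -/
structure IsCanvas {V : Type u} (G : PlaneGraph V) (Sverts : Set V) (SAdj : V → V → Prop)
    (L : V → Finset ℕ) : Prop where
  sadj_symm : ∀ u v, SAdj u v → SAdj v u
  sadj_sub : ∀ u v, SAdj u v → G.Adj u v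
  sadj_mem : ∀ u v, SAdj u v → u ∈ Sverts
  sverts_sub : Sverts ⊆ G.verts
  sverts_outer : ∀ v ∈ Sverts, G.OnOuter v
  sedges_outer : ∀ u v, SAdj u v → G.EdgeOnOuter u v
  lists_nonempty : ∀ v ∈ G.verts, (L v).Nonempty
  card_inner : ∀ v ∈ G.verts, ¬G.OnOuter v → 5 ≤ (L v).card
  card_outside_S : ∀ v ∈ G.verts, v ∉ Sverts → 3 ≤ (L v).card
  scolorable : ∃ φ : V → ℕ, (∀ v ∈ Sverts, φ v ∈ L v) ∧ ∀ u v, SAdj u v → φ u ≠ φ v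

/-- The adjacency relation of the single-edge path `p₁p₂`. -/
def pathAdj {V : Type u} (p1 p2 : V) : V → V → Prop :=
  fun u v => (u = p1 ∧ v = p2) ∨ (u = p2 ∧ v = p1)

/-- `(G, P, L)` is a canvas whose precolored subgraph is a path `P = p₁p₂` of
length one (in the boundary of the outer face of `G`). -/
def IsPathCanvas {V : Type u} (G : PlaneGraph V) (p1 p2 : V) (L : V → Finset ℕ) : Prop :=
  p1 ≠ p2 ∧ IsCanvas G {p1, p2} (pathAdj p1 p2) L

/-- `c = (c₁, c₂)` is a proper `L`-coloring of the edge `p₁p₂`. -/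
def ProperEdgeColoring {V : Type u} (L : V → Finset ℕ) (p1 p2 : V) (c : ℕ × ℕ) : Prop :=
  c.1 ∈ L p1 ∧ c.2 ∈ L p2 ∧ c.1 ≠ c.2

/-- `Φ_T(P', 𝒞)`: the colorings of the edge `q₁q₂` extendable to an `L`-coloring
of `G` whose restriction to `p₁p₂` lies in `C`. -/
def Phi {V : Type u} (G : PlaneGraph V) (L : V → Finset ℕ) (p1 p2 q1 q2 : V)
    (C : Set (ℕ × ℕ)) : Set (ℕ × ℕ) :=
  {c | ∃ φ : V → ℕ, (∀ v ∈ G.verts, φ v ∈ L v) ∧ (∀ u v, G.Adj u v → φ u ≠ φ v) ∧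
    (φ p1, φ p2) ∈ C ∧ φ q1 = c.1 ∧ φ q2 = c.2}

/-- The set of colors used on the first vertex of the path. -/
def fstColors (C : Set (ℕ × ℕ)) : Set ℕ := Prod.fst '' C

/-- The set of colors used on the second vertex of the path. -/
def sndColors (C : Set (ℕ × ℕ)) : Set ℕ := Prod.snd '' C

/-- A dictatorship: at least two (distinct) colorings, all agreeing on one of
the two vertices (the dictator). -/
def IsDictatorship (C : Set (ℕ × ℕ)) : Prop :=
  (∃ c ∈ C, ∃ d ∈ C, c ≠ d) ∧
  ((∃ a, ∀ c ∈ C, c.1 = a) ∨ (∃ a, ∀ c ∈ C, c.2 = a))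

/-- A democracy: exactly the two colorings `(x, y)` and `(y, x)`. -/
def IsDemocracy (C : Set (ℕ × ℕ)) : Prop :=
  ∃ x y : ℕ, x ≠ y ∧ C = {(x, y), (y, x)}

/-- A government is a dictatorship or a democracy. -/
def IsGovernment (C : Set (ℕ × ℕ)) : Prop := IsDictatorship C ∨ IsDemocracy C

/-- A confederacy: not a government, but the union of two governments. -/
def IsConfederacy (C : Set (ℕ × ℕ)) : Prop :=
  ¬IsGovernment C ∧ ∃ C1 C2 : Set (ℕ × ℕ), IsGovernment C1 ∧ IsGovernment C2 ∧ C = C1 ∪ C2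

/-- The canvas `(G, p₁p₂, L)` is a harmonica from the path `p₁p₂` to the path
`q₁q₂` with government `C`. -/
inductive IsHarmonica {V : Type u} (L : V → Finset ℕ) :
    PlaneGraph V → V → V → V → V → Set (ℕ × ℕ) → Prop where
  /-- Rule (i): `G = P = P'`. -/
  | same (G : PlaneGraph V) (p1 p2 q1 q2 : V) (C : Set (ℕ × ℕ))
      (hcanvas : IsPathCanvas G p1 p2 L)
      (hproper : ∀ c ∈ C, ProperEdgeColoring L p1 p2 c)
      (hgov : IsGovernment C)
      (hq : (q1 = p1 ∧ q2 = p2) ∨ (q1 = p2 ∧ q2 = p1))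
      (hverts : G.verts = {p1, p2})
      (hedges : ∀ u v, G.Adj u v → pathAdj p1 p2 u v) :
      IsHarmonica L G p1 p2 q1 q2 C
  /-- Rule (ii): `C` is a dictatorship, `G = P ∪ P'`, `V(P) ∩ V(P') = {z}`
  where `z` is the dictator. -/
  | cherry (G : PlaneGraph V) (p1 p2 q1 q2 z : V) (C : Set (ℕ × ℕ))
      (hcanvas : IsPathCanvas G p1 p2 L)
      (hproper : ∀ c ∈ C, ProperEdgeColoring L p1 p2 c)
      (hdict : IsDictatorship C)
      (hq : q1 ≠ q2) (hqadj : G.Adj q1 q2) (hqout : G.EdgeOnOuter q1 q2)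
      (hverts : G.verts = {p1, p2, q1, q2})
      (hedges : ∀ u v, G.Adj u v → pathAdj p1 p2 u v ∨ pathAdj q1 q2 u v)
      (hz : (({p1, p2} : Set V) ∩ ({q1, q2} : Set V)) = {z})
      (hzdict : (z = p1 ∧ ∃ a, ∀ c ∈ C, c.1 = a) ∨ (z = p2 ∧ ∃ a, ∀ c ∈ C, c.2 = a)) :
      IsHarmonica L G p1 p2 q1 q2 C
  /-- Rule (iii): `C` is a dictatorship with dictator `z ∈ V(P)` in color `c`,
  sitting on a triangle `z u₁ u₂`. -/
  | dict (G : PlaneGraph V) (p1 p2 q1 q2 z w u1 u2 : V) (c : ℕ) (L0 : Finset ℕ)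
      (C C' : Set (ℕ × ℕ))
      (hcanvas : IsPathCanvas G p1 p2 L)
      (hproper : ∀ d ∈ C, ProperEdgeColoring L p1 p2 d)
      (hdict : IsDictatorship C)
      (hq : q1 ≠ q2) (hqadj : G.Adj q1 q2) (hqout : G.EdgeOnOuter q1 q2)
      (hz : (z = p1 ∧ w = p2 ∧ (∀ d ∈ C, d.1 = c) ∧
              (u1 = w → sndColors C = (L0 : Set ℕ)) ∧
              (u2 = w → sndColors C = (L0 : Set ℕ))) ∨
            (z = p2 ∧ w = p1 ∧ (∀ d ∈ C, d.2 = c) ∧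
              (u1 = w → fstColors C = (L0 : Set ℕ)) ∧
              (u2 = w → fstColors C = (L0 : Set ℕ))))
      (hzu1 : G.Adj z u1) (hzu2 : G.Adj z u2) (hu12 : G.Adj u1 u2)
      (hL0 : L0.card = 2)
      (hLu1 : u1 ∉ ({p1, p2} : Set V) → L u1 = L0 ∪ {c})
      (hLu2 : u2 ∉ ({p1, p2} : Set V) → L u2 = L0 ∪ {c})
      (hu1P : u1 ∈ ({p1, p2} : Set V) → u1 = w)
      (hu2P : u2 ∈ ({p1, p2} : Set V) → u2 = w)
      (hdem : IsDemocracy C')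
      (hC'1 : fstColors C' = (L0 : Set ℕ)) (hC'2 : sndColors C' = (L0 : Set ℕ))
      (hrec : IsHarmonica L (G.deleteVerts (({p1, p2} : Set V) \ {u1, u2})) u1 u2 q1 q2 C') :
      IsHarmonica L G p1 p2 q1 q2 C
  /-- Rule (iv), with `i = 1`: `C` is a democracy, `z` is a common neighbor of
  `p₁, p₂`, and `p₁` is deleted. -/
  | demo1 (G : PlaneGraph V) (p1 p2 q1 q2 z : V) (a b c : ℕ) (L0 : Finset ℕ)
      (C C' : Set (ℕ × ℕ))
      (hcanvas : IsPathCanvas G p1 p2 L)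
      (hproper : ∀ d ∈ C, ProperEdgeColoring L p1 p2 d)
      (hdemC : IsDemocracy C)
      (hq : q1 ≠ q2) (hqadj : G.Adj q1 q2) (hqout : G.EdgeOnOuter q1 q2)
      (hz1 : G.Adj z p1) (hz2 : G.Adj z p2)
      (hLz : L z = L0 ∪ {c})
      (hC1 : fstColors C = (L0 : Set ℕ)) (hC2 : sndColors C = (L0 : Set ℕ))
      (hab : a ≠ b) (hL0ab : (L0 : Set ℕ) = {a, b})
      (hC' : C' = {(c, a), (c, b)})
      (hrec : IsHarmonica L (G.deleteVerts {p1}) z p2 q1 q2 C') :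
      IsHarmonica L G p1 p2 q1 q2 C
  /-- Rule (iv), with `i = 2`: `C` is a democracy, `z` is a common neighbor of
  `p₁, p₂`, and `p₂` is deleted. -/
  | demo2 (G : PlaneGraph V) (p1 p2 q1 q2 z : V) (a b c : ℕ) (L0 : Finset ℕ)
      (C C' : Set (ℕ × ℕ))
      (hcanvas : IsPathCanvas G p1 p2 L)
      (hproper : ∀ d ∈ C, ProperEdgeColoring L p1 p2 d)
      (hdemC : IsDemocracy C)
      (hq : q1 ≠ q2) (hqadj : G.Adj q1 q2) (hqout : G.EdgeOnOuter q1 q2)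
      (hz1 : G.Adj z p1) (hz2 : G.Adj z p2)
      (hLz : L z = L0 ∪ {c})
      (hC1 : fstColors C = (L0 : Set ℕ)) (hC2 : sndColors C = (L0 : Set ℕ))
      (hab : a ≠ b) (hL0ab : (L0 : Set ℕ) = {a, b})
      (hC' : C' = {(c, a), (c, b)})
      (hrec : IsHarmonica L (G.deleteVerts {p2}) z p1 q1 q2 C') :
      IsHarmonica L G p1 p2 q1 q2 C

/-- `(G, L)` is a coloring harmonica from `uv` to `w` (source `Sum.inr (u, v)`)
or from `u` to `w` (source `Sum.inl u`). -/
inductive IsColoringHarmonica {V : Type u} [DecidableEq V] :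
    PlaneGraph V → (V → Finset ℕ) → V ⊕ V × V → V → Prop where
  /-- `G` is a triangle with vertex set `{u, v, w}`, `L(u) = L(v) = L(w)` and
  `|L(u)| = 2`. -/
  | tri (G : PlaneGraph V) (L : V → Finset ℕ) (u v w : V)
      (hconn : G.Connected) (huv : u ≠ v) (huw : u ≠ w) (hvw : v ≠ w)
      (hu : G.OnOuter u) (hv : G.OnOuter v) (hw : G.OnOuter w)
      (huvout : G.EdgeOnOuter u v)
      (hverts : G.verts = {u, v, w})
      (hadjuv : G.Adj u v) (hadjvw : G.Adj v w) (hadjuw : G.Adj u w)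
      (hLuv : L u = L v) (hLvw : L v = L w) (hcard : (L u).card = 2) :
      IsColoringHarmonica G L (Sum.inr (u, v)) w
  /-- There is a triangle `uvz` on the outer face; delete one or both of
  `u, v` and recurse from `z`. -/
  | step (G : PlaneGraph V) (L : V → Finset ℕ) (u v w z : V) (s : Set V)
      (hconn : G.Connected) (huv : u ≠ v) (huw : u ≠ w) (hvw : v ≠ w)
      (hu : G.OnOuter u) (hv : G.OnOuter v) (hw : G.OnOuter w)
      (huvout : G.EdgeOnOuter u v)
      (hadjuv : G.Adj u v) (hadjuz : G.Adj u z) (hadjvz : G.Adj v z)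
      (hz : G.OnOuter z)
      (hLuv : L u = L v) (hsub : L u ⊆ L z)
      (hcardu : (L u).card = 2) (hcardz : (L z).card = 3)
      (hs : s = {u} ∨ s = {v} ∨ s = ({u, v} : Set V))
      (hrec : IsColoringHarmonica (G.deleteVerts s)
        (Function.update L z (L z \ L u)) (Sum.inl z) w) :
      IsColoringHarmonica G L (Sum.inr (u, v)) w
  /-- `|L(u)| = 1`, `u` sits on a triangle `uxy`; delete `u` and recurse
  from `xy`. -/
  | vert (G : PlaneGraph V) (L : V → Finset ℕ) (u w x y : V)
      (hconn : G.Connected) (huw : u ≠ w)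
      (hu : G.OnOuter u) (hw : G.OnOuter w)
      (hx : G.OnOuter x) (hy : G.OnOuter y)
      (hadjux : G.Adj u x) (hadjuy : G.Adj u y) (hadjxy : G.Adj x y)
      (hcardu : (L u).card = 1)
      (hLxy : L x \ L u = L y \ L u) (hcardx : (L x \ L u).card = 2)
      (hrec : IsColoringHarmonica (G.deleteVerts {u})
        (Function.update (Function.update L x (L x \ L u)) y (L y \ L u))
        (Sum.inr (x, y)) w) :
      IsColoringHarmonica G L (Sum.inl u) w

/-- `(G, L)` contains a coloring harmonica `(H, L')` with the given source and
target: `H` is a subgraph of `G` and `L'` agrees with `L` on `V(H)`. -/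
def ContainsColoringHarmonica {V : Type u} [DecidableEq V] (G : PlaneGraph V)
    (L : V → Finset ℕ) (st : V ⊕ V × V) (w : V) : Prop :=
  ∃ (H : PlaneGraph V) (L' : V → Finset ℕ), H.IsSubgraph G ∧
    (∀ x ∈ H.verts, L' x = L x) ∧ IsColoringHarmonica H L' st w

/-- `v` is a cutvertex of the boundary of the outer face of `G`. -/
def BoundaryCutvertex {V : Type u} (G : PlaneGraph V) (v : V) : Prop :=
  ∃ a b : V, a ∈ G.boundaryVerts ∧ b ∈ G.boundaryVerts ∧ a ≠ v ∧ b ≠ v ∧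
    Relation.ReflTransGen (fun x y => G.Adj x y ∧ G.EdgeOnOuter x y) a b ∧
    ¬Relation.ReflTransGen
      (fun x y => G.Adj x y ∧ G.EdgeOnOuter x y ∧ x ≠ v ∧ y ≠ v) a b

open Classical in
/-- The list assignment of the democratic reduction `T(P, L0, x)`:
remove the colors of `L0` from the list of `x` and from the lists of all
neighbors of `P` other than `y`. -/
noncomputable def reducedL {V : Type u} (G : PlaneGraph V) (L : V → Finset ℕ)
    (L0 : Finset ℕ) (Q : List V) (x y : V) : V → Finset ℕ := fun w =>
  if w = x ∨ (w ≠ y ∧ ∃ p ∈ Q, G.Adj w p) then L w \ L0 else L w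

/-- The vertex set of the precolored subgraph of the democratic reduction:
`S ∖ V(P)`, together with `x` as an isolated vertex if its new list is
smaller than 3. -/
def reducedSverts {V : Type u} (Sverts : Set V) (Q : List V) (x : V)
    (L' : V → Finset ℕ) : Set V :=
  {v | (v ∈ Sverts ∧ v ∉ Q) ∨ (v = x ∧ (L' x).card < 3)}

/-- The adjacency of the precolored subgraph of the democratic reduction:
`S ∖ V(P)`. -/
def reducedSAdj {V : Type u} (SAdj : V → V → Prop) (Q : List V) : V → V → Prop :=
  fun u v => SAdj u v ∧ u ∉ Q ∧ v ∉ Q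



/-- Continuous logarithm of a nonvanishing function on a contractible nice space. -/
theorem aux_lift {A : Type} [TopologicalSpace A] [SimplyConnectedSpace A]
    [LocallyPathConnectedSpace A] [Nonempty A] (F : A → ℂ) (hF : Continuous F)
    (h0 : ∀ a, F a ≠ 0) : ∃ g : A → ℂ, Continuous g ∧ ∀ a, Complex.exp (g a) = F a := by
  obtain ⟨a0⟩ := ‹Nonempty A›
  obtain ⟨G, ⟨-, hG⟩, -⟩ :=
    Complex.isCoveringMapOn_exp.existsUnique_continuousMap_lifts (⟨F, hF⟩ : C(A, ℂ))
      (a₀ := a0) (e₀ := Complex.log (F a0)) (by simpa using Complex.exp_log (h0 a0))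
      (fun a => by simpa using h0 a)
  exact ⟨G, G.continuous, fun a => congrFun hG a⟩

/-- A continuous function with constant exponential is constant. -/
theorem aux_const (h : ℝ → ℂ) (hc : Continuous h) (c : ℂ) (he : ∀ t, Complex.exp (h t) = c) :
    h 1 = h 0 := by
  have hc0 : c ≠ 0 := by rw [← he 0]; exact Complex.exp_ne_zero _
  obtain ⟨G, -, hu⟩ :=
    Complex.isCoveringMapOn_exp.existsUnique_continuousMap_lifts (⟨fun _ => c, by fun_prop⟩ : C(ℝ, ℂ))
      (a₀ := 0) (e₀ := h 0) (by simpa using he 0) (fun a => by simpa using hc0)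
  have h1 := hu ⟨h, hc⟩ ⟨rfl, funext he⟩
  have h2 := hu ⟨fun _ => h 0, by fun_prop⟩ ⟨rfl, funext fun _ => he 0⟩
  have := congrArg (fun f : C(ℝ, ℂ) => f 1) (h1.trans h2.symm)
  simpa using this

/-- Total change of logarithm along a path avoiding a point. -/
theorem aux_delta (γ : ℝ → ℂ) (hγ : Continuous γ) (p : ℂ) (hp : ∀ t, γ t ≠ p) :
    ∃ D : ℂ, (∀ (h : ℝ → ℂ) (c : ℂ), Continuous h → c ≠ 0 →
        (∀ t, Complex.exp (h t) = c * (γ t - p)) → h 1 - h 0 = D) ∧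
      ∀ l0 l1 : ℂ, Complex.exp l0 = γ 0 - p → Complex.exp l1 = γ 1 - p →
        ∃ n : ℤ, D = l1 - l0 + n * (2 * Real.pi * Complex.I) := by
  obtain ⟨g, hg, hge⟩ := aux_lift (fun t => γ t - p) (by fun_prop) (fun t => sub_ne_zero.2 (hp t))
  refine ⟨g 1 - g 0, ?_, ?_⟩
  · intro h c hh hc he
    have := aux_const (fun t => h t - g t) (by fun_prop) c (fun t => by
      rw [Complex.exp_sub, he, hge]
      field_simp [sub_ne_zero.2 (hp t)])
    linear_combination this
  · intro l0 l1 h0 h1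
    obtain ⟨n0, e0⟩ := Complex.exp_eq_exp_iff_exists_int.1 ((hge 0).trans h0.symm)
    obtain ⟨n1, e1⟩ := Complex.exp_eq_exp_iff_exists_int.1 ((hge 1).trans h1.symm)
    refine ⟨n1 - n0, ?_⟩
    rw [e0, e1]; push_cast; ring

/-- Weak (Hanani–Tutte/van Kampen style) non-planarity of `K₅`. -/
theorem aux_K5 (x : Fin 5 → ℂ) (E : Fin 5 → Fin 5 → Set ℂ)
    (hE : ∀ i j, i < j → JoinedIn (E i j) (x i) (x j))
    (hd : ∀ i j k l, i < j → k < l → i < k → j ≠ k → j ≠ l → Disjoint (E i j) (E k l)) :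
    False := by
  -- symmetric version of disjointness
  have hd' : ∀ i j k l, i < j → k < l → i ≠ k → i ≠ l → j ≠ k → j ≠ l →
      Disjoint (E i j) (E k l) := by
    intro i j k l h1 h2 h3 h4 h5 h6
    rcases lt_or_gt_of_ne h3 with h | h
    · exact hd i j k l h1 h2 h h5 h6
    · exact (hd k l i j h2 h1 h h4.symm h6.symm).symm
  -- paths
  have hpath : ∀ i j, ∃ γ : ℝ → ℂ, i < j → Continuous γ ∧ γ 0 = x i ∧ γ 1 = x j ∧
      ∀ t, γ t ∈ E i j := by
    intro i j
    by_cases hij : i < j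
    · obtain ⟨γ, hγ⟩ := hE i j hij
      refine ⟨γ.extend, fun _ => ⟨γ.continuous_extend, by simp, by simp, fun t => ?_⟩⟩
      have : γ.extend t ∈ range γ := by rw [← γ.extend_range]; exact mem_range_self t
      obtain ⟨s, hs⟩ := this
      rw [← hs]; exact hγ s
    · exact ⟨fun _ => 0, fun h => absurd h hij⟩
  choose γ hγ using hpath
  -- vertices avoid nonincident edges
  have hmem : ∀ i j, i < j → x i ∈ E i j ∧ x j ∈ E i j := fun i j h =>
    ⟨(hE i j h).source_mem, (hE i j h).target_mem⟩
  have hex : ∀ v a b : Fin 5, ∃ d, d ≠ v ∧ d ≠ a ∧ d ≠ b := by decide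
  have hv : ∀ v a b, a < b → v ≠ a → v ≠ b → ∀ t, γ a b t ≠ x v := by
    intro v a b hab hva hvb t ht
    obtain ⟨d, h1, h2, h3⟩ := hex v a b
    have m1 := (hγ a b hab).2.2.2 t
    rw [ht] at m1
    rcases lt_or_gt_of_ne h1 with h | h
    · exact disjoint_left.1 (hd' a b d v hab h h2.symm hva.symm h3.symm hvb.symm) m1
        (hmem d v h).2
    · exact disjoint_left.1 (hd' a b v d hab h hva.symm h2.symm hvb.symm h3.symm) m1
        (hmem v d h).1
  have hne : ∀ i j, i ≠ j → x i ≠ x j := by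
    intro i j hij
    obtain ⟨d, h1, h2, -⟩ := hex i j j
    rcases lt_or_gt_of_ne h1 with h | h
    · have := hv j d i h h2.symm hij.symm 1
      rwa [(hγ d i h).2.2.1] at this
    · have := hv j i d h hij.symm h2.symm 0
      rwa [(hγ i d h).2.1] at this
  -- base logarithms
  obtain ⟨l, hl, hlt⟩ : ∃ l : Fin 5 → Fin 5 → ℂ, (∀ i j, i ≠ j → Complex.exp (l i j) = x i - x j) ∧
      ∀ i j, i < j → l j i = l i j + Real.pi * Complex.I := by
    refine ⟨fun i j => if i < j then Complex.log (x i - x j) else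
      Complex.log (x j - x i) + Real.pi * Complex.I, ?_, ?_⟩
    · intro i j hij
      rcases lt_or_gt_of_ne hij with h | h
      · simp only [h, if_true]; rw [Complex.exp_log (sub_ne_zero.2 (hne i j hij))]
      · simp only [h.not_gt, if_false]
        rw [Complex.exp_add, Complex.exp_log (sub_ne_zero.2 (hne j i hij.symm)),
          Complex.exp_pi_mul_I]
        ring
    · intro i j h
      simp [h, h.not_gt]
  -- integers
  have hN : ∀ v a b, ∃ D : ℂ, ∃ n : ℤ, a < b → v ≠ a → v ≠ b →
      (∀ (h : ℝ → ℂ) (c : ℂ), Continuous h → c ≠ 0 →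
        (∀ t, Complex.exp (h t) = c * (γ a b t - x v)) → h 1 - h 0 = D) ∧
      D = l b v - l a v + n * (2 * Real.pi * Complex.I) := by
    intro v a b
    by_cases h : a < b ∧ v ≠ a ∧ v ≠ b
    · obtain ⟨hab, hva, hvb⟩ := h
      obtain ⟨D, h1, h2⟩ := aux_delta (γ a b) (hγ a b hab).1 (x v) (hv v a b hab hva hvb)
      obtain ⟨n, hn⟩ := h2 (l a v) (l b v)
        (by rw [(hγ a b hab).2.1]; exact hl a v hva.symm)
        (by rw [(hγ a b hab).2.2.1]; exact hl b v hvb.symm)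
      exact ⟨D, n, fun _ _ _ => ⟨h1, hn⟩⟩
    · exact ⟨0, 0, fun h1 h2 h3 => absurd ⟨h1, h2, h3⟩ h⟩
  choose D N hDN using hN
  have key : ∀ a b c d, a < b → c < d → a ≠ c → a ≠ d → b ≠ c → b ≠ d →
      D c a b + D b c d = D a c d + D d a b := by
    intro a b c d hab hcd hac had hbc hbd
    obtain ⟨ca, ea0, ea1, ma⟩ := hγ a b hab
    obtain ⟨cc, ec0, ec1, mc⟩ := hγ c d hcd
    obtain ⟨g, hg, hge⟩ := aux_lift (A := ℝ × ℝ) (fun p => γ a b p.1 - γ c d p.2) (by fun_prop)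
      (fun p => sub_ne_zero.2 fun h => disjoint_left.1
        (hd' a b c d hab hcd hac had hbc hbd) (ma p.1) (h ▸ mc p.2))
    have r1 := (hDN c a b hab hac.symm hbc.symm).1 (fun t => g (t, 0)) 1 (by fun_prop) one_ne_zero
      (fun t => by simp [hge, ec0])
    have r2 := (hDN d a b hab had.symm hbd.symm).1 (fun t => g (t, 1)) 1 (by fun_prop) one_ne_zero
      (fun t => by simp [hge, ec1])
    have r3 := (hDN a c d hcd hac had).1 (fun t => g (0, t)) (-1) (by fun_prop) (by simp)
      (fun t => by simp [hge, ea0])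
    have r4 := (hDN b c d hcd hbc hbd).1 (fun t => g (1, t)) (-1) (by fun_prop) (by simp)
      (fun t => by simp [hge, ea1])
    rw [← r1, ← r2, ← r3, ← r4]; ring
  have hpi : (Real.pi : ℂ) * Complex.I ≠ 0 := by
    simp [Real.pi_ne_zero]
  -- integer relations: `a < c`
  have rel : ∀ a b c d, a < b → c < d → a < c → a ≠ d → b ≠ c → b ≠ d →
      N c a b + N b c d - N a c d - N d a b =
        if c < b ∧ b < d then -1 else 0 := by
    intro a b c d hab hcd hac had hbc hbd
    have hk := key a b c d hab hcd hac.ne had hbc hbd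
    rw [(hDN c a b hab hac.ne' hbc.symm).2, (hDN b c d hcd hbc hbd).2,
      (hDN a c d hcd hac.ne had).2, (hDN d a b hab had.symm hbd.symm).2] at hk
    have e1 := hlt a c hac
    have e2 := hlt a d (hac.trans hcd)
    have goalC : ((N c a b + N b c d - N a c d - N d a b : ℤ) : ℂ) =
        ((if c < b ∧ b < d then -1 else 0 : ℤ) : ℂ) := by
      apply mul_right_cancel₀ (b := 2 * (Real.pi * Complex.I : ℂ)) (by simp)
      rcases lt_or_gt_of_ne hbc with h1 | h1
      · have e3 := hlt b c h1
        have e4 := hlt b d (h1.trans hcd)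
        rw [if_neg (fun h => absurd h.1 h1.not_gt)]
        push_cast
        linear_combination hk - e1 + e2 + e3 - e4
      · have e3 := hlt c b h1
        rcases lt_or_gt_of_ne hbd with h2 | h2
        · have e4 := hlt b d h2
          rw [if_pos ⟨h1, h2⟩]
          push_cast
          linear_combination hk - e1 + e2 - e3 - e4
        · have e4 := hlt d b h2
          rw [if_neg (fun h => absurd h.2 h2.not_gt)]
          push_cast
          linear_combination hk - e1 + e2 - e3 + e4
    exact_mod_cast goalC
  have q1 := rel 0 1 2 3 (by decide) (by decide) (by decide) (by decide) (by decide) (by decide)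
  have q2 := rel 0 2 1 3 (by decide) (by decide) (by decide) (by decide) (by decide) (by decide)
  have q3 := rel 0 3 1 2 (by decide) (by decide) (by decide) (by decide) (by decide) (by decide)
  have q4 := rel 0 1 2 4 (by decide) (by decide) (by decide) (by decide) (by decide) (by decide)
  have q5 := rel 0 2 1 4 (by decide) (by decide) (by decide) (by decide) (by decide) (by decide)
  have q6 := rel 0 4 1 2 (by decide) (by decide) (by decide) (by decide) (by decide) (by decide)
  have q7 := rel 0 1 3 4 (by decide) (by decide) (by decide) (by decide) (by decide) (by decide)
  have q8 := rel 0 3 1 4 (by decide) (by decide) (by decide) (by decide) (by decide) (by decide)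
  have q9 := rel 0 4 1 3 (by decide) (by decide) (by decide) (by decide) (by decide) (by decide)
  have q10 := rel 0 2 3 4 (by decide) (by decide) (by decide) (by decide) (by decide) (by decide)
  have q11 := rel 0 3 2 4 (by decide) (by decide) (by decide) (by decide) (by decide) (by decide)
  have q12 := rel 0 4 2 3 (by decide) (by decide) (by decide) (by decide) (by decide) (by decide)
  have q13 := rel 1 2 3 4 (by decide) (by decide) (by decide) (by decide) (by decide) (by decide)
  have q14 := rel 1 3 2 4 (by decide) (by decide) (by decide) (by decide) (by decide) (by decide)
  have q15 := rel 1 4 2 3 (by decide) (by decide) (by decide) (by decide) (by decide) (by decide)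
  rw [if_neg (by decide)] at q1 q3 q4 q6 q7 q9 q10 q12 q13 q15
  rw [if_pos (by decide)] at q2 q5 q8 q11 q14
  clear rel key hDN hlt hl hne hv hmem hγ hd' hd hE hpi
  omega

theorem aux_K5' (s v a b c : ℂ) (Sv Sa Sb Sc Va Vb Vc AB AC BC : Set ℂ)
    (j1 : JoinedIn Sv s v) (j2 : JoinedIn Sa s a) (j3 : JoinedIn Sb s b) (j4 : JoinedIn Sc s c)
    (j5 : JoinedIn Va v a) (j6 : JoinedIn Vb v b) (j7 : JoinedIn Vc v c)
    (j8 : JoinedIn AB a b) (j9 : JoinedIn AC a c) (j10 : JoinedIn BC b c)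
    (d1 : Disjoint Sv AB) (d2 : Disjoint Sv AC) (d3 : Disjoint Sv BC)
    (d4 : Disjoint Sa Vb) (d5 : Disjoint Sa Vc) (d6 : Disjoint Sa BC)
    (d7 : Disjoint Sb Va) (d8 : Disjoint Sb Vc) (d9 : Disjoint Sb AC)
    (d10 : Disjoint Sc Va) (d11 : Disjoint Sc Vb) (d12 : Disjoint Sc AB)
    (d13 : Disjoint Va BC) (d14 : Disjoint Vb AC) (d15 : Disjoint Vc AB) : False := by
  apply aux_K5 ![s, v, a, b, c]
    ![![∅, Sv, Sa, Sb, Sc], ![∅, ∅, Va, Vb, Vc], ![∅, ∅, ∅, AB, AC], ![∅, ∅, ∅, ∅, BC],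
      ![∅, ∅, ∅, ∅, ∅]]
  · simp [Fin.forall_fin_succ, *]
  · simp [Fin.forall_fin_succ, *]

section Combinatorics

variable {V : Type u}

/-- There is a star point joined to all vertices of `X` by connections avoiding all
non-incident edges inside `W`. -/
def AuxWD (Adj : V → V → Prop) (pos : V → ℂ) (E : V → V → Set ℂ) (W X : Finset V) : Prop :=
  ∃ (s : ℂ) (S : V → Set ℂ), (∀ x ∈ X, JoinedIn (S x) s (pos x)) ∧
    ∀ x ∈ X, ∀ y ∈ W, ∀ z ∈ W, Adj y z → x ≠ y → x ≠ z → Disjoint (S x) (E y z)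

/-- A weak drawing: only independent edges are required to be disjoint. -/
structure AuxDraw (Adj : V → V → Prop) (pos : V → ℂ) (E : V → V → Set ℂ) : Prop where
  symm : ∀ x y, Adj x y → Adj y x
  irrefl : ∀ x, ¬ Adj x x
  joined : ∀ x y, Adj x y → JoinedIn (E x y) (pos x) (pos y)
  disj : ∀ x y z w, Adj x y → Adj z w → x ≠ z → x ≠ w → y ≠ z → y ≠ w →
    Disjoint (E x y) (E z w)

variable {Adj : V → V → Prop} {pos : V → ℂ} {E : V → V → Set ℂ}

theorem AuxWD.mono {W X W' X' : Finset V} (h : AuxWD Adj pos E W X) (hW : W' ⊆ W)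
    (hX : X' ⊆ X) : AuxWD Adj pos E W' X' := by
  obtain ⟨s, S, h1, h2⟩ := h
  exact ⟨s, S, fun x hx => h1 x (hX hx),
    fun x hx y hy z hz => h2 x (hX hx) y (hW hy) z (hW hz)⟩

theorem AuxWD.start (hG : AuxDraw Adj pos E) {W X : Finset V} {v : V} (hv : v ∉ W)
    (hX : ∀ x ∈ X, Adj v x) : AuxWD Adj pos E W X := by
  refine ⟨pos v, fun x => E v x, fun x hx => hG.joined v x (hX x hx), ?_⟩
  intro x hx y hy z hz hyz hxy hxz
  exact hG.disj v x y z (hX x hx) hyz (fun h => hv (h ▸ hy)) (fun h => hv (h ▸ hz)) hxy hxz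

theorem AuxWD.delete (hG : AuxDraw Adj pos E) {W X W' X' : Finset V} {v : V}
    (h : AuxWD Adj pos E W X) (hvX : v ∈ X) (hW : W' ⊆ W) (hv : v ∉ W')
    (hX : ∀ x ∈ X', x ∈ X ∨ Adj v x) : AuxWD Adj pos E W' X' := by
  classical
  obtain ⟨s, S, h1, h2⟩ := h
  refine ⟨s, fun x => if x ∈ X then S x else S v ∪ E v x, ?_, ?_⟩
  · intro x hx
    by_cases hxX : x ∈ X
    · simpa [hxX] using h1 x hxX
    · have ha := (hX x hx).resolve_left hxX
      simp only [hxX, if_false]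
      exact ((h1 v hvX).mono subset_union_left).trans ((hG.joined v x ha).mono subset_union_right)
  · intro x hx y hy z hz hyz hxy hxz
    by_cases hxX : x ∈ X
    · simpa [hxX] using h2 x hxX y (hW hy) z (hW hz) hyz hxy hxz
    · have ha := (hX x hx).resolve_left hxX
      have hvy : v ≠ y := fun h => hv (h ▸ hy)
      have hvz : v ≠ z := fun h => hv (h ▸ hz)
      simp only [hxX, if_false]
      exact disjoint_union_left.2 ⟨h2 v hvX y (hW hy) z (hW hz) hyz hvy hvz,
        hG.disj v x y z ha hyz hvy hvz hxy hxz⟩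

/-- Reachability inside the vertex set `A`. -/
def AuxR (Adj : V → V → Prop) (A : Set V) : V → V → Prop :=
  Relation.ReflTransGen (fun x y => Adj x y ∧ x ∈ A ∧ y ∈ A)

theorem AuxR.joined (hG : AuxDraw Adj pos E) {A : Set V} {a b : V} (h : AuxR Adj A a b) :
    a = b ∨ JoinedIn {p | ∃ x ∈ A, ∃ y ∈ A, Adj x y ∧ p ∈ E x y} (pos a) (pos b) := by
  induction h with
  | refl => exact Or.inl rfl
  | @tail c d _ hcd ih =>
    obtain ⟨h1, h2, h3⟩ := hcd
    have hj : JoinedIn {p | ∃ x ∈ A, ∃ y ∈ A, Adj x y ∧ p ∈ E x y} (pos c) (pos d) :=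
      (hG.joined c d h1).mono fun p hp => ⟨c, h2, d, h3, h1, hp⟩
    rcases ih with rfl | ih
    · exact Or.inr hj
    · exact Or.inr (ih.trans hj)

theorem aux_no_K5 (hG : AuxDraw Adj pos E) {W X : Finset V} (h : AuxWD Adj pos E W X)
    {v a b c : V} (hv : v ∈ X) (ha : a ∈ X) (hb : b ∈ X) (hc : c ∈ X) (hXW : X ⊆ W)
    (hab : a ≠ b) (hac : a ≠ c) (hbc : b ≠ c)
    (va : Adj v a) (vb : Adj v b) (vc : Adj v c)
    (r1 : AuxR Adj {x | x ∈ W ∧ x ≠ v ∧ x ≠ c} a b)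
    (r2 : AuxR Adj {x | x ∈ W ∧ x ≠ v ∧ x ≠ b} a c)
    (r3 : AuxR Adj {x | x ∈ W ∧ x ≠ v ∧ x ≠ a} b c) : False := by
  obtain ⟨s, S, h1, h2⟩ := h
  have nva : v ≠ a := fun h => hG.irrefl _ (h ▸ va)
  have nvb : v ≠ b := fun h => hG.irrefl _ (h ▸ vb)
  have nvc : v ≠ c := fun h => hG.irrefl _ (h ▸ vc)
  have hS : ∀ w ∈ X, ∀ A : Set V, (∀ x ∈ A, x ∈ W ∧ w ≠ x) →
      Disjoint (S w) {p | ∃ x ∈ A, ∃ y ∈ A, Adj x y ∧ p ∈ E x y} := by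
    intro w hw A hA
    rw [disjoint_left]
    rintro p hp ⟨x, hx, y, hy, hxy, hpE⟩
    exact disjoint_left.1 (h2 w hw x (hA x hx).1 y (hA y hy).1 hxy (hA x hx).2 (hA y hy).2) hp hpE
  have hV : ∀ w, Adj v w → ∀ A : Set V, (∀ x ∈ A, v ≠ x ∧ w ≠ x) →
      Disjoint (E v w) {p | ∃ x ∈ A, ∃ y ∈ A, Adj x y ∧ p ∈ E x y} := by
    intro w hw A hA
    rw [disjoint_left]
    rintro p hp ⟨x, hx, y, hy, hxy, hpE⟩
    exact disjoint_left.1 (hG.disj v w x y hw hxy (hA x hx).1 (hA y hy).1 (hA x hx).2 (hA y hy).2)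
      hp hpE
  refine aux_K5' s (pos v) (pos a) (pos b) (pos c) (S v) (S a) (S b) (S c) (E v a) (E v b) (E v c)
    _ _ _ (h1 v hv) (h1 a ha) (h1 b hb) (h1 c hc) (hG.joined _ _ va) (hG.joined _ _ vb)
    (hG.joined _ _ vc) ((r1.joined hG).resolve_left hab) ((r2.joined hG).resolve_left hac)
    ((r3.joined hG).resolve_left hbc) ?_ ?_ ?_ ?_ ?_ ?_ ?_ ?_ ?_ ?_ ?_ ?_ ?_ ?_ ?_
  · exact hS v hv _ fun x hx => ⟨hx.1, hx.2.1.symm⟩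
  · exact hS v hv _ fun x hx => ⟨hx.1, hx.2.1.symm⟩
  · exact hS v hv _ fun x hx => ⟨hx.1, hx.2.1.symm⟩
  · exact h2 a ha v (hXW hv) b (hXW hb) vb nva.symm hab
  · exact h2 a ha v (hXW hv) c (hXW hc) vc nva.symm hac
  · exact hS a ha _ fun x hx => ⟨hx.1, hx.2.2.symm⟩
  · exact h2 b hb v (hXW hv) a (hXW ha) va nvb.symm hab.symm
  · exact h2 b hb v (hXW hv) c (hXW hc) vc nvb.symm hbc
  · exact hS b hb _ fun x hx => ⟨hx.1, hx.2.2.symm⟩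
  · exact h2 c hc v (hXW hv) a (hXW ha) va nvc.symm hac.symm
  · exact h2 c hc v (hXW hv) b (hXW hb) vb nvc.symm hbc.symm
  · exact hS c hc _ fun x hx => ⟨hx.1, hx.2.2.symm⟩
  · exact hV a va _ fun x hx => ⟨hx.2.1.symm, hx.2.2.symm⟩
  · exact hV b vb _ fun x hx => ⟨hx.2.1.symm, hx.2.2.symm⟩
  · exact hV c vc _ fun x hx => ⟨hx.2.1.symm, hx.2.2.symm⟩

/-- The hypotheses of the (strengthened) Thomassen theorem. -/
structure AuxCanv (Adj : V → V → Prop) (pos : V → ℂ) (E : V → V → Set ℂ)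
    (W X P : Finset V) (L : V → Finset ℕ) (φ : V → ℕ) : Prop where
  wd : AuxWD Adj pos E W X
  PX : P ⊆ X
  XW : X ⊆ W
  cardP : P.card ≤ 2
  clique : ∀ p ∈ P, ∀ q ∈ P, p ≠ q → Adj p q
  proper : ∀ p ∈ P, ∀ q ∈ P, p ≠ q → φ p ≠ φ q
  three : ∀ v ∈ X, v ∉ P → 3 ≤ (L v).card
  five : ∀ v ∈ W, v ∉ X → 5 ≤ (L v).card

/-- The precoloring `φ` of `P` extends to an `L`-coloring of `W`. -/
def AuxExt (Adj : V → V → Prop) (W P : Finset V) (L : V → Finset ℕ) (φ : V → ℕ) : Prop :=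
  ∃ ψ : V → ℕ, (∀ p ∈ P, ψ p = φ p) ∧ (∀ v ∈ W, v ∉ P → ψ v ∈ L v) ∧
    ∀ x ∈ W, ∀ y ∈ W, Adj x y → ψ x ≠ ψ y

/-- Splitting along a clique `Q ⊆ X`. -/
theorem aux_split [DecidableEq V] (hG : AuxDraw Adj pos E) {W X P : Finset V}
    {L : V → Finset ℕ} {φ : V → ℕ}
    (IH : ∀ (W' X' P' : Finset V) (L' : V → Finset ℕ) (φ' : V → ℕ),
      2 * W'.card + P.card < 2 * W.card + P'.card → AuxCanv Adj pos E W' X' P' L' φ' →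
      AuxExt Adj W' P' L' φ')
    (hC : AuxCanv Adj pos E W X P L φ) (W1 W2 Q : Finset V) (hQX : Q ⊆ X)
    (h1 : W1 ⊂ W) (h2 : W2 ⊂ W) (hQ1 : Q ⊆ W1) (hQ2 : Q ⊆ W2)
    (hun : ∀ x ∈ W, x ∈ W1 ∨ x ∈ W2) (hin : ∀ x, x ∈ W1 → x ∈ W2 → x ∈ Q)
    (hno : ∀ x ∈ W1, ∀ y ∈ W2, x ∉ Q → y ∉ Q → ¬ Adj x y)
    (hP : P ⊆ W1) (hQc : ∀ p ∈ Q, ∀ q ∈ Q, p ≠ q → Adj p q) (hQ0 : Q.Nonempty)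
    (hQ3 : Q.card ≤ 2) : AuxExt Adj W P L φ := by
  have c1 := Finset.card_lt_card h1
  have c2 := Finset.card_lt_card h2
  have cQ := hQ0.card_pos
  have cP := hC.cardP
  obtain ⟨ψ1, a1, a2, a3⟩ := IH W1 (X ∩ W1) P L φ (by omega)
    { wd := hC.wd.mono h1.1 Finset.inter_subset_left
      PX := Finset.subset_inter hC.PX hP
      XW := Finset.inter_subset_right
      cardP := cP
      clique := hC.clique
      proper := hC.proper
      three := fun v hv => hC.three v (Finset.mem_inter.1 hv).1
      five := fun v hv hv' => hC.five v (h1.1 hv) fun h => hv' (Finset.mem_inter.2 ⟨h, hv⟩) }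
  obtain ⟨ψ2, b1, b2, b3⟩ := IH W2 (X ∩ W2) Q (fun v => if v ∈ P then L v else L v) ψ1 (by omega)
    { wd := hC.wd.mono h2.1 Finset.inter_subset_left
      PX := Finset.subset_inter hQX hQ2
      XW := Finset.inter_subset_right
      cardP := hQ3
      clique := hQc
      proper := fun p hp q hq hpq => a3 p (hQ1 hp) q (hQ1 hq) (hQc p hp q hq hpq)
      three := fun v hv hvQ => by
        have := (Finset.mem_inter.1 hv)
        have hvP : v ∉ P := fun h => hvQ (hin v (hP h) this.2)
        simpa using hC.three v this.1 hvP
      five := fun v hv hv' => by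
        simpa using hC.five v (h2.1 hv) fun h => hv' (Finset.mem_inter.2 ⟨h, hv⟩) }
  have e2 : ∀ x ∈ W2, (if x ∈ W1 then ψ1 x else ψ2 x) = ψ2 x := by
    intro x hx
    by_cases hx1 : x ∈ W1
    · simp [hx1, b1 x (hin x hx1 hx)]
    · simp [hx1]
  have cross : ∀ x ∈ W1, ∀ y ∈ W2, Adj x y → ψ1 x ≠ (if y ∈ W1 then ψ1 y else ψ2 y) := by
    intro x hx y hy hxy
    by_cases hy1 : y ∈ W1
    · simpa [hy1] using a3 x hx y hy1 hxy
    · have hxQ : x ∈ Q := by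
        by_contra hxQ
        exact hno x hx y hy hxQ (fun h => hy1 (hQ1 h)) hxy
      rw [e2 y hy, ← b1 x hxQ]
      exact b3 x (hQ2 hxQ) y hy hxy
  refine ⟨fun x => if x ∈ W1 then ψ1 x else ψ2 x, ?_, ?_, ?_⟩
  · intro p hp
    simpa [hP hp] using a1 p hp
  · intro v hv hvP
    by_cases hv1 : v ∈ W1
    · simpa [hv1] using a2 v hv1 hvP
    · have hv2 := (hun v hv).resolve_left hv1
      have := b2 v hv2 fun h => hv1 (hQ1 h)
      simpa [hv1] using this
  · intro x hx y hy hxy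
    by_cases hx1 : x ∈ W1
    · by_cases hy1 : y ∈ W1
      · simpa [hx1, hy1] using a3 x hx1 y hy1 hxy
      · simpa [hx1] using cross x hx1 y ((hun y hy).resolve_left hy1) hxy
    · have hx2 := (hun x hx).resolve_left hx1
      by_cases hy1 : y ∈ W1
      · have := cross y hy1 x hx2 (hG.symm x y hxy)
        simpa [hy1] using this.symm
      · have hy2 := (hun y hy).resolve_left hy1
        simp only [e2 x hx2, e2 y hy2]
        exact b3 x hx2 y hy2 hxy

/-- If two neighbors of `v` are separated by `{v, c}`, we can split. -/
theorem aux_cut [DecidableEq V] (hG : AuxDraw Adj pos E) {W X P : Finset V}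
    {L : V → Finset ℕ} {φ : V → ℕ}
    (IH : ∀ (W' X' P' : Finset V) (L' : V → Finset ℕ) (φ' : V → ℕ),
      2 * W'.card + P.card < 2 * W.card + P'.card → AuxCanv Adj pos E W' X' P' L' φ' →
      AuxExt Adj W' P' L' φ')
    (hC : AuxCanv Adj pos E W X P L φ) {v a b c : V} (hv : v ∈ X) (hc : c ∈ X)
    (ha : a ∈ W) (hb : b ∈ W) (hav : a ≠ v) (hac : a ≠ c) (hbv : b ≠ v) (hbc : b ≠ c)
    (vc : Adj v c)
    (hr : ¬ AuxR Adj {x | x ∈ W ∧ x ≠ v ∧ x ≠ c} a b) : AuxExt Adj W P L φ := by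
  classical
  have nvc : v ≠ c := fun h => hG.irrefl _ (h ▸ vc)
  set A : Set V := {x | x ∈ W ∧ x ≠ v ∧ x ≠ c} with hA
  have haA : a ∈ A := ⟨ha, hav, hac⟩
  have hbA : b ∈ A := ⟨hb, hbv, hbc⟩
  let K : Finset V := W.filter fun x => AuxR Adj A a x
  have hKA : ∀ x, AuxR Adj A a x → x ∈ A := by
    intro x hx
    induction hx with
    | refl => exact haA
    | tail _ h _ => exact h.2.2
  have mK : ∀ x, x ∈ K ↔ AuxR Adj A a x := by
    intro x
    simp only [K, Finset.mem_filter]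
    exact ⟨fun h => h.2, fun h => ⟨(hKA x h).1, h⟩⟩
  have hKc : ∀ x ∈ K, ∀ y ∈ A, Adj x y → y ∈ K := by
    intro x hx y hy hxy
    rw [mK] at hx ⊢
    exact hx.tail ⟨hxy, hKA x hx, hy⟩
  have hvK : v ∉ K := fun h => (hKA v ((mK v).1 h)).2.1 rfl
  have hcK : c ∉ K := fun h => (hKA c ((mK c).1 h)).2.2 rfl
  have haK : a ∈ K := (mK a).2 Relation.ReflTransGen.refl
  have hbK : b ∉ K := fun h => hr ((mK b).1 h)
  have hKW : K ⊆ W := Finset.filter_subset _ _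
  have vW := hC.XW hv
  have cW := hC.XW hc
  let Q : Finset V := {v, c}
  have mQ : ∀ x, x ∈ Q ↔ x = v ∨ x = c := by simp [Q]
  have hQX : Q ⊆ X := by
    intro x hx
    rcases (mQ x).1 hx with rfl | rfl <;> assumption
  have hQc : ∀ p ∈ Q, ∀ q ∈ Q, p ≠ q → Adj p q := by
    intro p hp q hq hpq
    rcases (mQ p).1 hp with rfl | rfl <;> rcases (mQ q).1 hq with rfl | rfl
    · exact absurd rfl hpq
    · exact vc
    · exact hG.symm _ _ vc
    · exact absurd rfl hpq
  have hQ0 : Q.Nonempty := ⟨v, (mQ v).2 (Or.inl rfl)⟩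
  have hQ3 : Q.card ≤ 2 := Finset.card_le_two
  have s1 : K ∪ Q ⊂ W := by
    refine ⟨Finset.union_subset hKW (hQX.trans hC.XW), fun h => ?_⟩
    rcases Finset.mem_union.1 (h hb) with h | h
    · exact hbK h
    · rcases (mQ b).1 h with h | h
      · exact hbv h
      · exact hbc h
  have s2 : W \ K ⊂ W := by
    refine ⟨Finset.sdiff_subset, fun h => ?_⟩
    exact (Finset.mem_sdiff.1 (h ha)).2 haK
  have q1 : Q ⊆ K ∪ Q := Finset.subset_union_right
  have q2 : Q ⊆ W \ K := by
    intro x hx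
    rcases (mQ x).1 hx with rfl | rfl <;> exact Finset.mem_sdiff.2 ⟨by assumption, by assumption⟩
  have inter : ∀ x, x ∈ K ∪ Q → x ∈ W \ K → x ∈ Q := by
    intro x h1 h2
    exact (Finset.mem_union.1 h1).resolve_left (Finset.mem_sdiff.1 h2).2
  have hno : ∀ x ∈ K ∪ Q, ∀ y ∈ W \ K, x ∉ Q → y ∉ Q → ¬ Adj x y := by
    intro x hx y hy hxQ hyQ hxy
    have hxK := (Finset.mem_union.1 hx).resolve_right hxQ
    have hy' := Finset.mem_sdiff.1 hy
    exact hy'.2 (hKc x hxK y ⟨hy'.1, fun h => hyQ ((mQ y).2 (Or.inl h)),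
      fun h => hyQ ((mQ y).2 (Or.inr h))⟩ hxy)
  have hPW := hC.PX.trans hC.XW
  by_cases hPK : ∃ p ∈ P, p ∈ K
  · obtain ⟨p, hp, hpK⟩ := hPK
    refine aux_split hG IH hC (K ∪ Q) (W \ K) Q hQX s1 s2 q1 q2 ?_ inter hno ?_ hQc hQ0 hQ3
    · intro x hx
      by_cases h : x ∈ K
      · exact Or.inl (Finset.mem_union_left _ h)
      · exact Or.inr (Finset.mem_sdiff.2 ⟨hx, h⟩)
    · intro q hq
      by_cases hqQ : q ∈ Q
      · exact Finset.mem_union_right _ hqQ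
      · refine Finset.mem_union_left _ ?_
        by_cases hpq : p = q
        · exact hpq ▸ hpK
        · exact hKc p hpK q ⟨hPW hq, fun h => hqQ ((mQ q).2 (Or.inl h)),
            fun h => hqQ ((mQ q).2 (Or.inr h))⟩ (hC.clique p hp q hq hpq)
  · push Not at hPK
    refine aux_split hG IH hC (W \ K) (K ∪ Q) Q hQX s2 s1 q2 q1 ?_
      (fun x h1 h2 => inter x h2 h1)
      (fun x hx y hy h1 h2 h3 => hno y hy x hx h2 h1 (hG.symm _ _ h3)) ?_ hQc hQ0 hQ3
    · intro x hx
      by_cases h : x ∈ K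
      · exact Or.inr (Finset.mem_union_left _ h)
      · exact Or.inl (Finset.mem_sdiff.2 ⟨hx, h⟩)
    · intro q hq
      exact Finset.mem_sdiff.2 ⟨hPW hq, hPK q hq⟩

open Classical in
/-- Deleting a vertex `v` and reserving the colors `R` for it. -/
theorem aux_delete (hG : AuxDraw Adj pos E) {W X P : Finset V}
    {L : V → Finset ℕ} {φ : V → ℕ}
    (IH : ∀ (W' X' P' : Finset V) (L' : V → Finset ℕ) (φ' : V → ℕ),
      2 * W'.card + P.card < 2 * W.card + P'.card → AuxCanv Adj pos E W' X' P' L' φ' →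
      AuxExt Adj W' P' L' φ')
    (hC : AuxCanv Adj pos E W X P L φ) {v : V} (hvW : v ∈ W) (hvX : v ∈ X ∨ X = ∅)
    (R : Finset ℕ) (hR : R.card ≤ 2) (hRL : v ∉ P → R ⊆ L v) (hRP : v ∈ P → R = {φ v})
    (hfin : ∀ ψ : V → ℕ, (∀ p ∈ P, p ≠ v → ψ p = φ p) → ∃ c ∈ R, ∀ x ∈ X, Adj v x → ψ x ≠ c) :
    AuxExt Adj W P L φ := by
  set W' := W.erase v with hW'
  set X' := W'.filter fun x => x ∈ X ∨ Adj v x with hX'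
  set P' := P.erase v with hP'
  have hvW' : v ∉ W' := Finset.notMem_erase v W
  have cW : W'.card + 1 = W.card := Finset.card_erase_add_one hvW
  have cP : P.card ≤ P'.card + 1 := by
    have := Finset.pred_card_le_card_erase (s := P) (a := v)
    rw [hP']
    omega
  have cP2 := hC.cardP
  have hwd : AuxWD Adj pos E W' X' := by
    rcases hvX with hvX | hX0
    · exact hC.wd.delete hG hvX (Finset.erase_subset _ _) hvW'
        fun x hx => (Finset.mem_filter.1 hx).2
    · refine AuxWD.start hG hvW' fun x hx => ?_
      have := (Finset.mem_filter.1 hx).2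
      simpa [hX0] using this
  obtain ⟨ψ, h1, h2, h3⟩ := IH W' X' P' (fun x => if x ∉ X ∧ Adj v x then L x \ R else L x) φ
    (by omega)
    { wd := hwd
      PX := fun p hp => by
        have hp' := Finset.mem_erase.1 hp
        exact Finset.mem_filter.2 ⟨Finset.mem_erase.2 ⟨hp'.1, hC.XW (hC.PX hp'.2)⟩,
          Or.inl (hC.PX hp'.2)⟩
      XW := Finset.filter_subset _ _
      cardP := (Finset.card_erase_le).trans cP2
      clique := fun p hp q hq => hC.clique p (Finset.mem_of_mem_erase hp) q
        (Finset.mem_of_mem_erase hq)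
      proper := fun p hp q hq => hC.proper p (Finset.mem_of_mem_erase hp) q
        (Finset.mem_of_mem_erase hq)
      three := fun x hx hxP => by
        obtain ⟨hxW', hx2⟩ := Finset.mem_filter.1 hx
        obtain ⟨hxv, hxW⟩ := Finset.mem_erase.1 hxW'
        by_cases hxX : x ∈ X
        · have := hC.three x hxX fun h => hxP (Finset.mem_erase.2 ⟨hxv, h⟩)
          simpa [hxX] using this
        · have h5 := hC.five x hxW hxX
          have ha := hx2.resolve_left hxX
          have := Finset.le_card_sdiff R (L x)
          simp only [hxX, ha, not_false_eq_true, and_self, if_true]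
          omega
      five := fun x hx hxX' => by
        obtain ⟨hxv, hxW⟩ := Finset.mem_erase.1 hx
        have hxX : x ∉ X := fun h => hxX' (Finset.mem_filter.2 ⟨hx, Or.inl h⟩)
        have hxA : ¬ Adj v x := fun h => hxX' (Finset.mem_filter.2 ⟨hx, Or.inr h⟩)
        simpa [hxA] using hC.five x hxW hxX }
  obtain ⟨c, hcR, hc⟩ := hfin ψ fun p hp hpv => h1 p (Finset.mem_erase.2 ⟨hpv, hp⟩)
  have hcv : ∀ x ∈ W', Adj v x → ψ x ≠ c := by
    intro x hx hvx
    by_cases hxX : x ∈ X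
    · exact hc x hxX hvx
    · have hxP : x ∉ P' := fun h => hxX (hC.PX (Finset.mem_of_mem_erase h))
      have := h2 x hx hxP
      simp only [hxX, hvx, not_false_eq_true, and_self, if_true] at this
      intro h
      exact (Finset.mem_sdiff.1 this).2 (h ▸ hcR)
  refine ⟨Function.update ψ v c, ?_, ?_, ?_⟩
  · intro p hp
    by_cases hpv : p = v
    · subst hpv
      have := hRP hp
      rw [this, Finset.mem_singleton] at hcR
      simp [hcR]
    · rw [Function.update_of_ne hpv]
      exact h1 p (Finset.mem_erase.2 ⟨hpv, hp⟩)
  · intro x hx hxP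
    by_cases hxv : x = v
    · subst hxv
      simpa using hRL hxP hcR
    · rw [Function.update_of_ne hxv]
      have := h2 x (Finset.mem_erase.2 ⟨hxv, hx⟩) fun h => hxP (Finset.mem_of_mem_erase h)
      dsimp only at this
      split_ifs at this
      · exact (Finset.mem_sdiff.1 this).1
      · exact this
  · intro x hx y hy hxy
    by_cases hxv : x = v
    · subst hxv
      have hyx : y ≠ x := fun h => hG.irrefl _ (h ▸ hxy)
      rw [Function.update_self, Function.update_of_ne hyx]
      exact (hcv y (Finset.mem_erase.2 ⟨hyx, hy⟩) hxy).symm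
    · by_cases hyv : y = v
      · subst hyv
        rw [Function.update_self, Function.update_of_ne hxv]
        exact hcv x (Finset.mem_erase.2 ⟨hxv, hx⟩) (hG.symm _ _ hxy)
      · rw [Function.update_of_ne hxv, Function.update_of_ne hyv]
        exact h3 x (Finset.mem_erase.2 ⟨hxv, hx⟩) y (Finset.mem_erase.2 ⟨hyv, hy⟩) hxy

open Classical in
/-- Adding a vertex to the precolored clique. -/
theorem aux_add {W X P : Finset V}
    {L : V → Finset ℕ} {φ : V → ℕ}
    (IH : ∀ (W' X' P' : Finset V) (L' : V → Finset ℕ) (φ' : V → ℕ),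
      2 * W'.card + P.card < 2 * W.card + P'.card → AuxCanv Adj pos E W' X' P' L' φ' →
      AuxExt Adj W' P' L' φ')
    (hG : AuxDraw Adj pos E)
    (hC : AuxCanv Adj pos E W X P L φ) {v : V} (hvX : v ∈ X) (hvP : v ∉ P)
    (hP : P.card ≤ 1) (hadj : ∀ p ∈ P, Adj v p) : AuxExt Adj W P L φ := by
  have h3 := hC.three v hvX hvP
  have hcard : (P.image φ).card < (L v).card := by
    have := Finset.card_image_le (s := P) (f := φ)
    omega
  obtain ⟨c, hcL, hcP⟩ := Finset.exists_mem_notMem_of_card_lt_card hcard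
  have hne : ∀ p ∈ P, p ≠ v := fun p hp h => hvP (h ▸ hp)
  have hφ : ∀ p ∈ P, φ p ≠ c := fun p hp h => hcP (Finset.mem_image.2 ⟨p, hp, h⟩)
  obtain ⟨ψ, h1, h2, h3⟩ := IH W X (insert v P) L (Function.update φ v c)
    (by rw [Finset.card_insert_of_notMem hvP]; omega)
    { wd := hC.wd
      PX := Finset.insert_subset hvX hC.PX
      XW := hC.XW
      cardP := by rw [Finset.card_insert_of_notMem hvP]; omega
      clique := by
        intro p hp q hq hpq
        rcases Finset.mem_insert.1 hp with rfl | hp' <;> rcases Finset.mem_insert.1 hq with rfl | hq'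
        · exact absurd rfl hpq
        · exact hadj q hq'
        · exact hG.symm _ _ (hadj p hp')
        · exact hC.clique p hp' q hq' hpq
      proper := by
        intro p hp q hq hpq
        rcases Finset.mem_insert.1 hp with rfl | hp' <;> rcases Finset.mem_insert.1 hq with rfl | hq'
        · exact absurd rfl hpq
        · rw [Function.update_self, Function.update_of_ne hpq.symm]; exact (hφ q hq').symm
        · rw [Function.update_self, Function.update_of_ne hpq]; exact hφ p hp'
        · rw [Function.update_of_ne (hne p hp'), Function.update_of_ne (hne q hq')]
          exact hC.proper p hp' q hq' hpq
      three := fun x hx hxP => hC.three x hx fun h => hxP (Finset.mem_insert_of_mem h)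
      five := hC.five }
  refine ⟨ψ, ?_, ?_, h3⟩
  · intro p hp
    rw [h1 p (Finset.mem_insert_of_mem hp), Function.update_of_ne (hne p hp)]
  · intro x hx hxP
    by_cases hxv : x = v
    · subst hxv
      rw [h1 x (Finset.mem_insert_self _ _), Function.update_self]
      exact hcL
    · exact h2 x hx fun h => (Finset.mem_insert.1 h).elim hxv hxP

/-- The strengthened Thomassen theorem for weak drawings. -/
theorem aux_main (hG : AuxDraw Adj pos E) : ∀ (n : ℕ) (W X P : Finset V) (L : V → Finset ℕ)
    (φ : V → ℕ), 2 * W.card < n + P.card → AuxCanv Adj pos E W X P L φ → AuxExt Adj W P L φ := by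
  classical
  intro n
  induction n with
  | zero =>
    intro W X P L φ hn hC
    have := Finset.card_le_card (hC.PX.trans hC.XW)
    omega
  | succ n ih =>
    intro W X P L φ hn hC
    have IH : ∀ (W' X' P' : Finset V) (L' : V → Finset ℕ) (φ' : V → ℕ),
        2 * W'.card + P.card < 2 * W.card + P'.card → AuxCanv Adj pos E W' X' P' L' φ' →
        AuxExt Adj W' P' L' φ' := fun W' X' P' L' φ' h h' => ih W' X' P' L' φ' (by omega) h'
    -- a precolored vertex without neighbors in `X \ P` can be deleted
    by_cases hdel : ∃ p ∈ P, ∀ x ∈ X, x ∉ P → ¬ Adj p x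
    · obtain ⟨p, hp, hpx⟩ := hdel
      refine aux_delete hG IH hC (hC.XW (hC.PX hp)) (Or.inl (hC.PX hp)) {φ p} (by simp)
        (fun h => absurd hp h) (fun _ => rfl) ?_
      intro ψ hψ
      refine ⟨φ p, by simp, ?_⟩
      intro x hx hpx'
      have hxP : x ∈ P := by
        by_contra h
        exact hpx x hx h hpx'
      have hxp : x ≠ p := fun h => hG.irrefl _ (h ▸ hpx')
      rw [hψ x hxP hxp]
      exact hC.proper x hxP p hp hxp
    push Not at hdel
    by_cases hP0 : P = ∅
    · subst hP0
      by_cases hX0 : X = ∅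
      · by_cases hW0 : W = ∅
        · subst hW0
          exact ⟨φ, by simp, by simp, by simp⟩
        · obtain ⟨v, hv⟩ := Finset.nonempty_iff_ne_empty.2 hW0
          have h5 := hC.five v hv (by simp [hX0])
          obtain ⟨c, hc⟩ := Finset.card_pos.1 (by omega : 0 < (L v).card)
          refine aux_delete hG IH hC hv (Or.inr hX0) {c} (by simp) (fun _ => by simpa using hc)
            (fun h => by simp at h) ?_
          intro ψ _
          exact ⟨c, by simp, by simp [hX0]⟩
      · obtain ⟨v, hv⟩ := Finset.nonempty_iff_ne_empty.2 hX0
        exact aux_add IH hG hC hv (by simp) (by simp) (by simp)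
    obtain ⟨p, hp⟩ := Finset.nonempty_iff_ne_empty.2 hP0
    obtain ⟨v, hvX, hvP, hpv⟩ := hdel p hp
    have hvp := hG.symm _ _ hpv
    by_cases hP1 : P.card ≤ 1
    · refine aux_add IH hG hC hvX hvP hP1 fun q hq => ?_
      rw [Finset.card_le_one.1 hP1 q hq p hp]
      exact hvp
    -- now `P` is an edge; look at the `X`-neighbors of `v`
    have h3 := hC.three v hvX hvP
    by_cases hthree : ∃ y ∈ X, ∃ z ∈ X, Adj v y ∧ Adj v z ∧ y ≠ p ∧ z ≠ p ∧ y ≠ z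
    · obtain ⟨y, hy, z, hz, vy, vz, hyp, hzp, hyz⟩ := hthree
      have hpX := hC.PX hp
      have npv : p ≠ v := fun h => hG.irrefl _ (h ▸ hpv)
      have nyv : y ≠ v := fun h => hG.irrefl _ (h ▸ vy)
      have nzv : z ≠ v := fun h => hG.irrefl _ (h ▸ vz)
      by_cases r1 : AuxR Adj {x | x ∈ W ∧ x ≠ v ∧ x ≠ z} p y
      · by_cases r2 : AuxR Adj {x | x ∈ W ∧ x ≠ v ∧ x ≠ y} p z
        · by_cases r3 : AuxR Adj {x | x ∈ W ∧ x ≠ v ∧ x ≠ p} y z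
          · exact (aux_no_K5 hG hC.wd hvX hpX hy hz hC.XW hyp.symm hzp.symm hyz hvp vy vz
              r1 r2 r3).elim
          · exact aux_cut hG IH hC hvX hpX (hC.XW hy) (hC.XW hz) nyv hyp nzv hzp hvp r3
        · exact aux_cut hG IH hC hvX hy (hC.XW hpX) (hC.XW hz) npv hyp.symm nzv hyz.symm vy r2
      · exact aux_cut hG IH hC hvX hz (hC.XW hpX) (hC.XW hy) npv hzp.symm nyv hyz vz r1
    · push Not at hthree
      have hle : 2 ≤ ((L v).erase (φ p)).card := by
        have := Finset.pred_card_le_card_erase (s := L v) (a := φ p)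
        omega
      obtain ⟨R, hRs, hRc⟩ := Finset.exists_subset_card_eq hle
      have hRL : R ⊆ L v := hRs.trans (Finset.erase_subset _ _)
      have hRp : φ p ∉ R := fun h => (Finset.mem_erase.1 (hRs h)).1 rfl
      refine aux_delete hG IH hC (hC.XW hvX) (Or.inl hvX) R hRc.le (fun _ => hRL)
        (fun h => absurd h hvP) ?_
      intro ψ hψ
      have npv : p ≠ v := fun h => hG.irrefl _ (h ▸ hpv)
      have hψp := hψ p hp npv
      by_cases hy : ∃ y ∈ X, Adj v y ∧ y ≠ p
      · obtain ⟨y, hyX, vy, hyp⟩ := hy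
        obtain ⟨c, hcR, hcy⟩ : ∃ c ∈ R, c ≠ ψ y :=
          Finset.exists_mem_ne (by omega) (ψ y)
        refine ⟨c, hcR, fun x hx hvx => ?_⟩
        by_cases hxp : x = p
        · rw [hxp, hψp]
          intro h
          exact hRp (h ▸ hcR)
        · have : y = x := hthree y hyX x hx vy hvx hyp hxp
          rw [← this]
          exact hcy.symm
      · push Not at hy
        obtain ⟨c, hcR⟩ := Finset.card_pos.1 (by omega : 0 < R.card)
        refine ⟨c, hcR, fun x hx hvx => ?_⟩
        rw [hy x hx hvx, hψp]
        intro h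
        exact hRp (h ▸ hcR)

end Combinatorics

section Topology

variable {V : Type u}

theorem aux_arc_compact (G : PlaneGraph V) {u v : V} (h : G.Adj u v) :
    IsCompact (G.arc s(u, v)) := by
  obtain ⟨f, hf, -, him, -, -⟩ := G.arc_arc u v h
  rw [← him]
  exact isCompact_Icc.image_of_continuousOn hf

theorem aux_union_compact (G : PlaneGraph V) (Q : V → V → Prop) :
    IsCompact {p | ∃ u v, G.Adj u v ∧ Q u v ∧ p ∈ G.arc s(u, v)} := by
  have hfin : {q : V × V | G.Adj q.1 q.2 ∧ Q q.1 q.2}.Finite := by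
    refine (G.finite_verts.prod G.finite_verts).subset ?_
    rintro ⟨u, v⟩ ⟨h, -⟩
    exact ⟨G.adj_mem u v h, G.adj_mem v u (G.adj_symm u v h)⟩
  have := hfin.isCompact_biUnion (f := fun q : V × V => G.arc s(q.1, q.2))
    fun q hq => aux_arc_compact G hq.1
  convert this using 1
  ext p
  simp only [mem_setOf_eq, mem_iUnion, exists_prop, Prod.exists, and_assoc]

theorem aux_image_compact (G : PlaneGraph V) : IsCompact G.image := by
  have h1 : IsCompact (G.pos '' G.verts) := (G.finite_verts.image _).isCompact
  have h2 := aux_union_compact G fun _ _ => True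
  have := h1.union h2
  convert this using 1
  ext p
  simp [PlaneGraph.image]

theorem aux_far_preconnected (r : ℝ) (hr : 0 ≤ r) :
    IsPreconnected (Metric.closedBall (0 : ℝ × ℝ) r)ᶜ := by
  have hrank : 1 < Module.rank ℝ (ℝ × ℝ) := by
    rw [← Module.finrank_eq_rank]
    simp
  have h := (isPreconnected_sphere hrank (0 : ℝ × ℝ) 1).prod (isPreconnected_Ioi (a := r))
  have h2 := h.image (fun q : (ℝ × ℝ) × ℝ => q.2 • q.1) (by fun_prop)
  convert h2 using 1
  ext x
  simp only [mem_compl_iff, Metric.mem_closedBall, dist_zero_right, not_le, mem_image, mem_prod,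
    mem_sphere_iff_norm, sub_zero, mem_Ioi]
  constructor
  · intro hx
    have hx0 : ‖x‖ ≠ 0 := (hr.trans_lt hx).ne'
    refine ⟨(‖x‖⁻¹ • x, ‖x‖), ⟨?_, hx⟩, ?_⟩
    · rw [norm_smul, norm_inv, norm_norm, inv_mul_cancel₀ hx0]
    · simp [smul_smul, hx0]
  · rintro ⟨⟨y, t⟩, ⟨hy, ht⟩, rfl⟩
    simp only at hy ht ⊢
    rw [norm_smul, hy, mul_one, Real.norm_eq_abs]
    exact ht.trans_le (le_abs_self t)

theorem aux_comp_sub (G : PlaneGraph V) {p : ℝ × ℝ} (hp : p ∈ G.outerFace) :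
    connectedComponentIn G.imageᶜ p ⊆ G.outerFace := by
  intro q hq
  refine ⟨connectedComponentIn_subset _ _ hq, ?_⟩
  rw [← connectedComponentIn_eq hq]
  exact hp.2

theorem aux_outer_joined (G : PlaneGraph V) {p q : ℝ × ℝ} (hp : p ∈ G.outerFace)
    (hq : q ∈ G.outerFace) : JoinedIn G.outerFace p q := by
  obtain ⟨r, hr0, hr⟩ := (aux_image_compact G).isBounded.subset_closedBall_lt 0 0
  have hU := aux_far_preconnected r hr0.le
  have hUs : (Metric.closedBall (0 : ℝ × ℝ) r)ᶜ ⊆ G.imageᶜ := compl_subset_compl.2 hr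
  have key : ∀ p ∈ G.outerFace,
      (Metric.closedBall (0 : ℝ × ℝ) r)ᶜ ⊆ connectedComponentIn G.imageᶜ p ∧
      ((Metric.closedBall (0 : ℝ × ℝ) r)ᶜ).Nonempty := by
    intro p hp
    have : ¬ connectedComponentIn G.imageᶜ p ⊆ Metric.closedBall (0 : ℝ × ℝ) r :=
      fun h => hp.2 (Metric.isBounded_closedBall.subset h)
    obtain ⟨x, hx, hx'⟩ := not_subset.1 this
    refine ⟨?_, x, hx'⟩
    rw [connectedComponentIn_eq hx]
    exact hU.subset_connectedComponentIn hx' hUs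
  obtain ⟨h1, x, hx⟩ := key p hp
  obtain ⟨h2, -⟩ := key q hq
  have heq : connectedComponentIn G.imageᶜ p = connectedComponentIn G.imageᶜ q :=
    (connectedComponentIn_eq (h1 hx)).trans (connectedComponentIn_eq (h2 hx)).symm
  have hop : IsOpen (connectedComponentIn G.imageᶜ p) :=
    (aux_image_compact G).isClosed.isOpen_compl.connectedComponentIn
  have hpm : p ∈ connectedComponentIn G.imageᶜ p := mem_connectedComponentIn hp.1
  have hqm : q ∈ connectedComponentIn G.imageᶜ p := by
    rw [heq]
    exact mem_connectedComponentIn hq.1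
  have hc : IsConnected (connectedComponentIn G.imageᶜ p) :=
    ⟨⟨p, hpm⟩, isPreconnected_connectedComponentIn⟩
  exact ((hop.isConnected_iff_isPathConnected.1 hc).joinedIn p hpm q hqm).mono
    (aux_comp_sub G hp)

/-- The identification of `ℝ × ℝ` with `ℂ`. -/
noncomputable def auxE : ℝ × ℝ → ℂ := fun p => Complex.equivRealProdCLM.symm p

theorem auxE_cont : Continuous auxE := Complex.equivRealProdCLM.symm.continuous

theorem auxE_inj : Function.Injective auxE := Complex.equivRealProdCLM.symm.injective

theorem auxE_joined {S : Set (ℝ × ℝ)} {p q : ℝ × ℝ} (h : JoinedIn S p q) :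
    JoinedIn (auxE '' S) (auxE p) (auxE q) := by
  obtain ⟨γ, hγ⟩ := h
  exact ⟨γ.map auxE_cont, fun t => ⟨γ t, hγ t, rfl⟩⟩

theorem aux_draw (G : PlaneGraph V) :
    AuxDraw G.Adj (fun v => auxE (G.pos v)) (fun u v => auxE '' G.arc s(u, v)) where
  symm := G.adj_symm
  irrefl := G.adj_irrefl
  joined := by
    intro x y h
    obtain ⟨f, hf, -, him, h0, h1⟩ := G.arc_arc x y h
    refine auxE_joined ?_
    rw [← him]
    have hI : JoinedIn (f '' Icc 0 1) (f 0) (f 1) := by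
      refine JoinedIn.ofLine hf rfl rfl ?_
      rfl
    rwa [h0, h1] at hI
  disj := by
    intro x y z w hxy hzw xz xw yz yw
    refine (disjoint_image_iff auxE_inj).2 ?_
    rw [Set.disjoint_iff]
    intro p hp
    have hne : s(x, y) ≠ s(z, w) := by
      intro h
      rcases Sym2.eq_iff.1 h with h | h
      · exact xz h.1
      · exact xw h.1
    obtain ⟨v, ⟨hv1, hv2⟩, -⟩ := G.arc_meet x y z w hxy hzw hne hp
    rcases hv1 with rfl | rfl <;> rcases hv2 with h | h
    · exact xz h
    · exact xw h
    · exact yz h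
    · exact yw h

theorem aux_wd (G : PlaneGraph V) (W X : Finset V) (hX : ∀ x ∈ X, x ∈ G.verts ∧ G.OnOuter x) :
    AuxWD G.Adj (fun v => auxE (G.pos v)) (fun u v => auxE '' G.arc s(u, v)) W X := by
  have key : ∀ x ∈ X, ∃ B : Set (ℝ × ℝ), (∃ u ∈ G.outerFace, JoinedIn B u (G.pos x)) ∧
      ∀ y z, G.Adj y z → x ≠ y → x ≠ z → Disjoint B (G.arc s(y, z)) := by
    intro x hx
    obtain ⟨hxv, hxo⟩ := hX x hx
    have hcl := (aux_union_compact G fun y z => x ≠ y ∧ x ≠ z).isClosed.isOpen_compl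
    have hm : G.pos x ∈ {p | ∃ u v, G.Adj u v ∧ (x ≠ u ∧ x ≠ v) ∧ p ∈ G.arc s(u, v)}ᶜ := by
      rintro ⟨u, v, huv, ⟨h1, h2⟩, hp⟩
      rcases G.arc_avoid u v huv x hxv hp with h | h
      · exact h1 h
      · exact h2 h
    obtain ⟨ε, hε, hb⟩ := Metric.isOpen_iff.1 hcl _ hm
    obtain ⟨u, hu, hd⟩ := Metric.mem_closure_iff.1 (frontier_subset_closure hxo) ε hε
    refine ⟨Metric.ball (G.pos x) ε, ⟨u, hu, ?_⟩, ?_⟩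
    · have hpc := (convex_ball (G.pos x) ε).isPathConnected ⟨_, Metric.mem_ball_self hε⟩
      refine hpc.joinedIn u ?_ _ (Metric.mem_ball_self hε)
      rw [Metric.mem_ball, dist_comm]
      exact hd
    · intro y z hyz h1 h2
      rw [disjoint_left]
      intro p hp hp'
      exact hb hp ⟨y, z, hyz, ⟨h1, h2⟩, hp'⟩
  by_cases hne : X.Nonempty
  · obtain ⟨x0, hx0⟩ := hne
    obtain ⟨-, ⟨s, hs, -⟩, -⟩ := key x0 hx0
    classical
    choose! B hB1 hB2 using key
    refine ⟨auxE s, fun x => auxE '' (G.outerFace ∪ B x), ?_, ?_⟩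
    · intro x hx
      obtain ⟨u, hu, hj⟩ := hB1 x hx
      exact auxE_joined (((aux_outer_joined G hs hu).mono subset_union_left).trans
        (hj.mono subset_union_right))
    · intro x hx y _ z _ hyz h1 h2
      refine (disjoint_image_iff auxE_inj).2 (disjoint_union_left.2 ⟨?_, hB2 x hx y z hyz h1 h2⟩)
      rw [disjoint_left]
      intro p hp hp'
      refine hp.1 (Or.inr ?_)
      simp only [mem_iUnion]
      exact ⟨y, z, hyz, hp'⟩
  · rw [Finset.not_nonempty_iff_eq_empty] at hne
    subst hne
    exact ⟨0, fun _ => ∅, by simp, by simp⟩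

end Topology

/-- Theorem 3.2: let `T = (G, P, L)` be a canvas where
`P = p₁p₂` is a path of length one in the boundary `C` of the outer face of
`G`. If `𝒞` is a non-empty collection of proper `L`-colorings of `P` and
`P' = q₁q₂` is an edge of `G` with both ends in `C`, then `Φ_T(P', 𝒞)` is
non-empty. -/
theorem phi_nonempty {V : Type u} (G : PlaneGraph V) (p1 p2 q1 q2 : V)
    (L : V → Finset ℕ) (C : Set (ℕ × ℕ))
    (hT : IsPathCanvas G p1 p2 L)
    (hq : G.Adj q1 q2) (hq1 : G.OnOuter q1) (hq2 : G.OnOuter q2)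
    (hCne : C.Nonempty)
    (hCproper : ∀ c ∈ C, ProperEdgeColoring L p1 p2 c) :
    (Phi G L p1 p2 q1 q2 C).Nonempty := by
  classical
  obtain ⟨hp12, hK⟩ := hT
  obtain ⟨c, hc⟩ := hCne
  obtain ⟨hc1, hc2, hc12⟩ := hCproper c hc
  have hp : G.Adj p1 p2 := hK.sadj_sub p1 p2 (Or.inl ⟨rfl, rfl⟩)
  let W : Finset V := G.finite_verts.toFinset
  let X : Finset V := W.filter fun v => G.OnOuter v
  let P : Finset V := {p1, p2}
  let φ : V → ℕ := fun v => if v = p1 then c.1 else c.2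
  have φ1 : φ p1 = c.1 := by simp [φ]
  have φ2 : φ p2 = c.2 := by simp [φ, hp12.symm]
  have mW : ∀ v, v ∈ W ↔ v ∈ G.verts := fun v => by simp [W]
  have mX : ∀ v, v ∈ X ↔ v ∈ G.verts ∧ G.OnOuter v := fun v => by simp [X, W]
  have mP : ∀ v, v ∈ P ↔ v = p1 ∨ v = p2 := fun v => by simp [P]
  have mPs : ∀ v, v ∈ P ↔ v ∈ ({p1, p2} : Set V) := fun v => by simp [P]
  have hcanv : AuxCanv G.Adj (fun v => auxE (G.pos v)) (fun u v => auxE '' G.arc s(u, v))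
      W X P L φ :=
    { wd := aux_wd G W X fun x hx => (mX x).1 hx
      PX := fun v hv => (mX v).2 ⟨hK.sverts_sub ((mPs v).1 hv), hK.sverts_outer v ((mPs v).1 hv)⟩
      XW := Finset.filter_subset _ _
      cardP := Finset.card_le_two
      clique := by
        intro p hpP q hqP hpq
        rcases (mP p).1 hpP with rfl | rfl <;> rcases (mP q).1 hqP with rfl | rfl
        · exact absurd rfl hpq
        · exact hp
        · exact G.adj_symm _ _ hp
        · exact absurd rfl hpq
      proper := by
        intro p hpP q hqP hpq
        rcases (mP p).1 hpP with h | h <;> rcases (mP q).1 hqP with h' | h'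
        · exact absurd (h.trans h'.symm) hpq
        · rw [h, h', φ1, φ2]
          exact hc12
        · rw [h, h', φ1, φ2]
          exact hc12.symm
        · exact absurd (h.trans h'.symm) hpq
      three := fun v hv hvP => hK.card_outside_S v ((mX v).1 hv).1 fun h => hvP ((mPs v).2 h)
      five := fun v hv hvX => hK.card_inner v ((mW v).1 hv) fun h =>
        hvX ((mX v).2 ⟨(mW v).1 hv, h⟩) }
  obtain ⟨ψ, h1, h2, h3⟩ := aux_main (aux_draw G) (2 * W.card + 1) W X P L φ (by omega) hcanv
  have e1 : ψ p1 = c.1 := (h1 p1 ((mP p1).2 (Or.inl rfl))).trans φ1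
  have e2 : ψ p2 = c.2 := (h1 p2 ((mP p2).2 (Or.inr rfl))).trans φ2
  refine ⟨(ψ q1, ψ q2), ψ, ?_, ?_, ?_, rfl, rfl⟩
  · intro v hv
    by_cases hvP : v ∈ P
    · rcases (mP v).1 hvP with h | h
      · rw [h, e1]
        exact hc1
      · rw [h, e2]
        exact hc2
    · exact h2 v ((mW v).2 hv) hvP
  · intro u v huv
    exact h3 u ((mW u).2 (G.adj_mem u v huv)) v ((mW v).2 (G.adj_mem v u (G.adj_symm u v huv))) huv
  · rw [e1, e2]
    exact hc
end

section
/- Let T(P, L0, x) = (G', S', L') be a democratic reduction of a path P in a canvas T = (G, S, L) with respect to a two-element color set L0 and centered at x. If φ is an L'-coloring of G', then φ can be extended to an L-coloring of G. -/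
/-!
Common definitions: plane graphs (given by a concrete embedding in the plane),
outer face, canvases, list colorings, governments, harmonicas and coloring
harmonicas, following Postle–Thomas,
"Five-list-coloring graphs on surfaces III".
-/

open Set

universe u

namespace ThetaTop

open Set unitInterval

/-- `f` has a continuous logarithm on `K`. -/
def HasLog (f : ℂ → ℂ) (K : Set ℂ) : Prop :=
  ∃ g : ℂ → ℂ, ContinuousOn g K ∧ ∀ z ∈ K, Complex.exp (g z) = f z

lemma HasLog.mono {f : ℂ → ℂ} {K K' : Set ℂ} (h : HasLog f K) (hs : K' ⊆ K) : HasLog f K' := by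
  obtain ⟨g, hg, h⟩ := h
  exact ⟨g, hg.mono hs, fun z hz => h z (hs hz)⟩

/-- Homotopy lifting for the exponential. -/
lemma log_homotopy {A : Type} [TopologicalSpace A] (H : C(I × A, ℂ)) (hH : ∀ q, H q ≠ 0)
    (f : C(A, ℂ)) (h0 : ∀ a, H (0, a) = Complex.exp (f a)) :
    ∃ g : C(A, ℂ), ∀ a, Complex.exp (g a) = H (1, a) := by
  let H' : C(I × A, {z : ℂ // z ≠ 0}) := ⟨fun q => ⟨H q, hH q⟩, by fun_prop⟩
  have h0' : ∀ a, H' (0, a) = (fun z : ℂ ↦ (⟨_, z.exp_ne_zero⟩ : {z : ℂ // z ≠ 0})) (f a) :=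
    fun a => Subtype.ext (h0 a)
  let G := Complex.isCoveringMap_exp.liftHomotopy H' f h0'
  refine ⟨⟨fun a => G (1, a), by fun_prop⟩, fun a => ?_⟩
  have := congr_fun (Complex.isCoveringMap_exp.liftHomotopy_lifts H' f h0') (1, a)
  exact congrArg Subtype.val this

lemma hasLog_of_subtype {f : ℂ → ℂ} {K : Set ℂ} (g : C(K, ℂ))
    (h : ∀ a : K, Complex.exp (g a) = f a) : HasLog f K := by
  classical
  refine ⟨fun z => if hz : z ∈ K then g ⟨z, hz⟩ else 0, ?_, fun z hz => ?_⟩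
  · rw [continuousOn_iff_continuous_domRestrict]
    convert! g.continuous using 1
    ext a
    simp
  · simp [hz, h]

/-- Two logarithms of the same function on a preconnected set differ by a constant. -/
lemma log_unique {X : Type*} [TopologicalSpace X] {S : Set X} (hS : IsPreconnected S)
    {g₁ g₂ : X → ℂ} (h₁ : ContinuousOn g₁ S) (h₂ : ContinuousOn g₂ S)
    (h : ∀ z ∈ S, Complex.exp (g₁ z) = Complex.exp (g₂ z)) :
    ∃ c : ℂ, Complex.exp c = 1 ∧ ∀ z ∈ S, g₁ z = g₂ z + c := by
  rcases S.eq_empty_or_nonempty with rfl | ⟨a, ha⟩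
  · exact ⟨0, by simp, by simp⟩
  have : PreconnectedSpace S := isPreconnected_iff_preconnectedSpace.1 hS
  have hc := Complex.isCoveringMap_exp.const_of_comp (A := S) (g := fun z => g₁ z - g₂ z)
    ((continuousOn_iff_continuous_domRestrict.1 h₁).sub (continuousOn_iff_continuous_domRestrict.1 h₂))
    (by
      intro x y
      apply Subtype.ext
      simp [Complex.exp_sub, h x x.2, h y y.2])
  refine ⟨g₁ a - g₂ a, by simp [Complex.exp_sub, h a ha], fun z hz => ?_⟩
  have := hc ⟨z, hz⟩ ⟨a, ha⟩
  simp only at this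
  rw [← this]; ring

/-- Gluing logarithms. -/
lemma HasLog.union {f : ℂ → ℂ} {A B : Set ℂ} (hA : IsClosed A) (hB : IsClosed B)
    (hAB : IsPreconnected (A ∩ B)) (h1 : HasLog f A) (h2 : HasLog f B) : HasLog f (A ∪ B) := by
  classical
  obtain ⟨g₁, c₁, e₁⟩ := h1
  obtain ⟨g₂, c₂, e₂⟩ := h2
  obtain ⟨c, hc, hcc⟩ := log_unique hAB (c₁.mono inter_subset_left) (c₂.mono inter_subset_right)
    (fun z hz => by rw [e₁ z hz.1, e₂ z hz.2])
  refine ⟨fun z => if z ∈ A then g₁ z else g₂ z + c, ?_, ?_⟩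
  · apply ContinuousOn.union_of_isClosed _ _ hA hB
    · exact c₁.congr fun z hz => by simp [hz]
    · refine (c₂.add continuousOn_const).congr (f := fun z => g₂ z + c) fun z hz => ?_
      by_cases hzA : z ∈ A
      · simp [hzA, hcc z ⟨hzA, hz⟩]
      · simp [hzA]
  · rintro z hz
    by_cases hzA : z ∈ A
    · simp [hzA, e₁]
    · simp [hzA, Complex.exp_add, hc, e₂ z (hz.resolve_left hzA)]

/-- A nonvanishing continuous function on the plane has a logarithm. -/
lemma hasLog_univ {f : ℂ → ℂ} (hf : Continuous f) (h0 : ∀ z, f z ≠ 0) : HasLog f univ := by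
  obtain ⟨g, hg⟩ := log_homotopy (A := ℂ) ⟨fun q => f ((q.1 : ℝ) * q.2), by fun_prop⟩
    (fun q => h0 _) (ContinuousMap.const _ (Complex.log (f 0)))
    (fun a => by simp [Complex.exp_log (h0 0)])
  exact ⟨g, g.continuous.continuousOn, fun z _ => by simp [hg]⟩

/-- The identity on a circle has no logarithm. -/
lemma no_log_sphere (d : ℂ) {r : ℝ} (hr : 0 < r) :
    ¬ HasLog (fun z => z - d) (Metric.sphere d r) := by
  rintro ⟨g, hg, h⟩
  have hm : ∀ t : ℝ, circleMap d r t ∈ Metric.sphere d r := fun t => circleMap_mem_sphere d hr.le t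
  have hc : Continuous fun t : ℝ => g (circleMap d r t) :=
    hg.comp_continuous (continuous_circleMap d r) hm
  obtain ⟨c, -, hcc⟩ := log_unique (S := (univ : Set ℝ)) isPreconnected_univ
    (g₁ := fun t => g (circleMap d r t)) (g₂ := fun t => Complex.log r + t * Complex.I)
    hc.continuousOn (by fun_prop) (fun t _ => by
      rw [h _ (hm t), Complex.exp_add, Complex.exp_log (by exact_mod_cast hr.ne')]
      simp [circleMap])
  have h0 := hcc 0 trivial
  have h1 := hcc (2 * Real.pi) trivial
  have : circleMap d r (2 * Real.pi) = circleMap d r 0 := by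
    simpa using (periodic_circleMap d r) 0
  rw [this, h0] at h1
  have h2 : ((2 * Real.pi : ℝ) : ℂ) * Complex.I = 0 := by
    have := h1
    push_cast at this ⊢
    linear_combination -this
  simp [Real.pi_ne_zero] at h2

/-- Points joined in the complement of `K`. -/
lemma hasLog_of_joinedIn {K : Set ℂ} {d p : ℂ} (h : JoinedIn Kᶜ p d) :
    HasLog (fun z => (z - d) / (z - p)) K := by
  obtain ⟨γ, hγ⟩ := h
  have hp : ∀ a : K, (a : ℂ) - p ≠ 0 := fun a h => by
    have := hγ 0
    rw [γ.source] at this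
    exact this (sub_eq_zero.1 h ▸ a.2)
  obtain ⟨g, hg⟩ := log_homotopy (A := K)
    ⟨fun q => ((q.2 : ℂ) - γ q.1) / ((q.2 : ℂ) - p),
      Continuous.div (by fun_prop) (by fun_prop) fun q => hp q.2⟩
    (fun q => div_ne_zero (fun h => hγ q.1 (sub_eq_zero.1 h ▸ q.2.2)) (hp _))
    (ContinuousMap.const _ 0) (fun a => by simp [hp])
  exact hasLog_of_subtype g fun a => by simp [hg]

lemma hasLog_of_comp {K : Set ℂ} (hK : IsClosed K) {d p : ℂ}
    (h : d ∈ connectedComponentIn Kᶜ p) : HasLog (fun z => (z - d) / (z - p)) K := by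
  have hp : p ∈ Kᶜ := connectedComponentIn_nonempty_iff.1 ⟨d, h⟩
  have hc : IsConnected (connectedComponentIn Kᶜ p) := isConnected_connectedComponentIn_iff.2 hp
  have hpc := (hK.isOpen_compl.connectedComponentIn.isConnected_iff_isPathConnected).1 hc
  exact hasLog_of_joinedIn
    ((hpc.joinedIn p (mem_connectedComponentIn hp) d h).mono (connectedComponentIn_subset _ _))

lemma closure_comp {K : Set ℂ} {p a : ℂ} {U : Set ℂ} (hU : IsPreconnected U)
    (hUK : U ⊆ Kᶜ) (hp : p ∈ U) (ha : a ∈ closure U) (haK : a ∉ K) :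
    a ∈ connectedComponentIn Kᶜ p := by
  have h1 : IsPreconnected (insert a U) :=
    hU.subset_closure (subset_insert _ _) (insert_subset ha subset_closure)
  exact h1.subset_connectedComponentIn (mem_insert_of_mem _ hp) (insert_subset haK hUK)
    (mem_insert _ _)

lemma frontier_comp {K : Set ℂ} {p : ℂ} {a : ℂ} (hp : p ∉ K)
    (ha : a ∈ closure (connectedComponentIn Kᶜ p)) (ha' : a ∉ connectedComponentIn Kᶜ p) :
    a ∈ K := by
  by_contra h
  exact ha' (closure_comp isPreconnected_connectedComponentIn (connectedComponentIn_subset _ _)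
    (mem_connectedComponentIn hp) ha h)

lemma sep_bounded {K : Set ℂ} (hK : IsClosed K) {d p : ℂ} (hd : d ∉ K) (hp : p ∉ K)
    (hb : Bornology.IsBounded (connectedComponentIn Kᶜ d))
    (hl : HasLog (fun z => (z - d) / (z - p)) K) : p ∈ connectedComponentIn Kᶜ d := by
  classical
  by_contra hpU
  set U := connectedComponentIn Kᶜ d with hU
  have hUo : IsOpen U := hK.isOpen_compl.connectedComponentIn
  have hdU : d ∈ U := mem_connectedComponentIn hd
  obtain ⟨g, hg, hge⟩ := hl
  obtain ⟨G, hG⟩ := ContinuousMap.exists_restrict_eq hK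
    (⟨K.domRestrict g, continuousOn_iff_continuous_domRestrict.1 hg⟩ : C(K, ℂ))
  have hGg : ∀ z ∈ K, G z = g z := fun z hz => by
    have := congrArg (fun F : C(K, ℂ) => F ⟨z, hz⟩) hG
    exact this
  have hcont : Continuous fun z => if z ∈ U then (z - p) * Complex.exp (G z) else z - d := by
    apply Continuous.if
    · intro a ha
      have haK : a ∈ K := frontier_comp hd (frontier_subset_closure ha)
        (fun h => by
          have := hUo.frontier_eq ▸ ha
          exact this.2 h)
      have hap : a - p ≠ 0 := fun h => hp (sub_eq_zero.1 h ▸ haK)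
      rw [hGg a haK, hge a haK]
      field_simp
    · fun_prop
    · fun_prop
  obtain ⟨L, hL, hLe⟩ := hasLog_univ hcont (fun z => by
    split_ifs with h
    · exact mul_ne_zero (fun h' => hpU (sub_eq_zero.1 h' ▸ h)) (Complex.exp_ne_zero _)
    · exact fun h' => h (sub_eq_zero.1 h' ▸ hdU))
  obtain ⟨r, hr⟩ := hb.subset_ball d
  have hr0 : 0 < r := Metric.pos_of_mem_ball (hr hdU)
  refine no_log_sphere d hr0 ⟨L, hL.mono (subset_univ _), fun z hz => ?_⟩
  rw [hLe z trivial]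
  refine if_neg ?_
  intro hz'
  have := hr hz'
  rw [Metric.mem_ball] at this
  rw [Metric.mem_sphere] at hz
  linarith

lemma ext_conn {r : ℝ} (hr : 0 < r) : IsPreconnected {z : ℂ | r < ‖z‖} := by
  have h1 : IsPreconnected {z : ℂ | Real.log r < z.re} := (convex_halfSpace_re_gt _).isPreconnected
  have : {z : ℂ | r < ‖z‖} = Complex.exp '' {z : ℂ | Real.log r < z.re} := by
    ext z
    simp only [mem_ofPred_eq, mem_image]
    constructor
    · intro hz
      have hz0 : z ≠ 0 := by
        rintro rfl
        simp at hz; linarith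
      exact ⟨Complex.log z, by rw [Complex.log_re]; exact Real.log_lt_log hr hz,
        Complex.exp_log hz0⟩
    · rintro ⟨w, hw, rfl⟩
      rw [Complex.norm_exp]
      exact (Real.log_lt_iff_lt_exp hr).1 hw
  rw [this]
  exact h1.image _ Complex.continuous_exp.continuousOn

lemma unbounded_comp {K : Set ℂ} (hK : IsCompact K) {d p : ℂ}
    (hd : ¬ Bornology.IsBounded (connectedComponentIn Kᶜ d))
    (hp : ¬ Bornology.IsBounded (connectedComponentIn Kᶜ p)) :
    p ∈ connectedComponentIn Kᶜ d := by
  obtain ⟨r, hr0, hr⟩ := hK.isBounded.subset_closedBall_lt 0 0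
  have key : ∀ q, ¬ Bornology.IsBounded (connectedComponentIn Kᶜ q) →
      q ∈ Kᶜ ∧ {z : ℂ | r < ‖z‖} ⊆ connectedComponentIn Kᶜ q := by
    intro q hq
    have hqK : q ∈ Kᶜ := by
      by_contra h
      apply hq
      rw [connectedComponentIn_eq_empty h]
      exact Bornology.isBounded_empty
    refine ⟨hqK, ?_⟩
    have : ∃ z ∈ connectedComponentIn Kᶜ q, r < ‖z‖ := by
      by_contra! h
      exact hq ((Metric.isBounded_closedBall (x := (0 : ℂ)) (r := r)).subset (fun z hz => by simpa using h z hz))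
    obtain ⟨z, hz, hzr⟩ := this
    rw [connectedComponentIn_eq hz]
    refine (ext_conn hr0).subset_connectedComponentIn hzr fun w hw hwK => ?_
    have := hr hwK
    simp at this hw
    linarith
  obtain ⟨hdK, hd'⟩ := key d hd
  obtain ⟨hpK, hp'⟩ := key p hp
  have hz : ((r + 1 : ℝ) : ℂ) ∈ {z : ℂ | r < ‖z‖} := by
    simp only [mem_ofPred_eq, Complex.norm_real, Real.norm_eq_abs]
    rw [abs_of_pos] <;> linarith
  rw [connectedComponentIn_eq (hd' hz), ← connectedComponentIn_eq (hp' hz)]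
  exact mem_connectedComponentIn hpK

lemma comp_symm {K : Set ℂ} {d p : ℂ} (h : d ∈ connectedComponentIn K p) :
    p ∈ connectedComponentIn K d := by
  rw [← connectedComponentIn_eq h]
  exact mem_connectedComponentIn (connectedComponentIn_nonempty_iff.1 ⟨d, h⟩)

/-- If `(z - d) / (z - p)` has a logarithm on `K`, then `K` does not separate `d` and `p`. -/
lemma comp_of_hasLog {K : Set ℂ} (hK : IsCompact K) {d p : ℂ} (hd : d ∉ K) (hp : p ∉ K)
    (hl : HasLog (fun z => (z - d) / (z - p)) K) : p ∈ connectedComponentIn Kᶜ d := by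
  by_cases h1 : Bornology.IsBounded (connectedComponentIn Kᶜ d)
  · exact sep_bounded hK.isClosed hd hp h1 hl
  by_cases h2 : Bornology.IsBounded (connectedComponentIn Kᶜ p)
  · apply comp_symm
    refine sep_bounded hK.isClosed hp hd h2 ?_
    obtain ⟨g, hg, h⟩ := hl
    exact ⟨fun z => - g z, hg.neg, fun z hz => by rw [Complex.exp_neg, h z hz, inv_div]⟩
  · exact unbounded_comp hK h1 h2

end ThetaTop

namespace ThetaTop

open Set unitInterval

/-- `A` is a simple arc from `a` to `b`. -/
def IsArc (A : Set ℂ) (a b : ℂ) : Prop :=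
  ∃ f : ℝ → ℂ, ContinuousOn f (Icc 0 1) ∧ InjOn f (Icc 0 1) ∧ f '' Icc 0 1 = A ∧ f 0 = a ∧ f 1 = b

lemma IsArc.compact {A : Set ℂ} {a b : ℂ} (h : IsArc A a b) : IsCompact A := by
  obtain ⟨f, hf, -, rfl, -⟩ := h
  exact isCompact_Icc.image_of_continuousOn hf

lemma IsArc.pathConn {A : Set ℂ} {a b : ℂ} (h : IsArc A a b) : IsPathConnected A := by
  obtain ⟨f, hf, -, rfl, -⟩ := h
  exact ((convex_Icc (0 : ℝ) 1).isPathConnected ⟨0, by simp⟩).image' hf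

lemma IsArc.left_mem {A : Set ℂ} {a b : ℂ} (h : IsArc A a b) : a ∈ A := by
  obtain ⟨f, hf, -, rfl, rfl, -⟩ := h
  exact ⟨0, by simp, rfl⟩

lemma IsArc.right_mem {A : Set ℂ} {a b : ℂ} (h : IsArc A a b) : b ∈ A := by
  obtain ⟨f, hf, -, rfl, -, rfl⟩ := h
  exact ⟨1, by simp, rfl⟩

lemma IsArc.hasLog {A : Set ℂ} {a b : ℂ} (h : IsArc A a b) {F : ℂ → ℂ} (hF : ContinuousOn F A)
    (h0 : ∀ z ∈ A, F z ≠ 0) : HasLog F A := by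
  obtain ⟨f, hf, hi, rfl, -⟩ := h
  let e : I → ℂ := fun t => f t
  have he : Continuous e := continuousOn_iff_continuous_domRestrict.1 hf
  have hemb : Topology.IsClosedEmbedding e := he.isClosedEmbedding
    (fun s t hst => Subtype.ext (hi s.2 t.2 hst))
  have hm : ∀ t, e t ∈ f '' Icc 0 1 := fun t => ⟨t, t.2, rfl⟩
  have hFe : Continuous fun t => F (e t) := hF.comp_continuous he hm
  obtain ⟨g, hg⟩ := log_homotopy (A := I) ⟨fun q => F (e (q.1 * q.2)),
      hFe.comp (continuous_fst.mul continuous_snd)⟩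
    (fun q => h0 _ (hm _)) (ContinuousMap.const _ (Complex.log (F (e 0))))
    (fun a => by simp [Complex.exp_log (h0 _ (hm 0))])
  obtain ⟨G, hG⟩ := ContinuousMap.exists_extension hemb g
  refine ⟨G, G.continuous.continuousOn, ?_⟩
  rintro _ ⟨t, ht, rfl⟩
  have h1 : G (e ⟨t, ht⟩) = g ⟨t, ht⟩ := congrArg (fun F : C(I, ℂ) => F ⟨t, ht⟩) hG
  have h2 := hg ⟨t, ht⟩
  rw [← h1] at h2
  simpa [e] using h2

/-- Jordan-type separation. -/
lemma jordan_sep {R B : Set ℂ} (hR : IsCompact R) (hRp : IsPathConnected R) (hB : IsCompact B)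
    (hBp : IsPathConnected B) {r₁ r₂ p : ℂ} (hne : r₁ ≠ r₂) (h1R : r₁ ∈ R) (h2R : r₂ ∈ R)
    (h1B : r₁ ∈ B) (h2B : r₂ ∈ B)
    (hW : ∀ z ∈ B, z ≠ r₁ → z ≠ r₂ → z ∈ connectedComponentIn Rᶜ p) :
    ∃ d ∈ connectedComponentIn Rᶜ p, d ∉ B ∧ d ∉ connectedComponentIn (R ∪ B)ᶜ p := by
  classical
  by_contra! hcon
  obtain ⟨g₁, c₁, e₁⟩ : HasLog (fun z => (z - r₁) / (z - r₂)) Rᶜ :=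
    hasLog_of_joinedIn (by rw [compl_compl]; exact hRp.joinedIn _ h2R _ h1R)
  obtain ⟨g₂, c₂, e₂⟩ : HasLog (fun z => (z - r₁) / (z - r₂)) Bᶜ :=
    hasLog_of_joinedIn (by rw [compl_compl]; exact hBp.joinedIn _ h2B _ h1B)
  have hY : connectedComponentIn (R ∪ B)ᶜ p ⊆ (R ∪ B)ᶜ := connectedComponentIn_subset _ _
  have hWR : connectedComponentIn Rᶜ p ⊆ Rᶜ := connectedComponentIn_subset _ _
  have hYR : connectedComponentIn (R ∪ B)ᶜ p ⊆ Rᶜ := fun z hz h => hY hz (Or.inl h)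
  have hYB : connectedComponentIn (R ∪ B)ᶜ p ⊆ Bᶜ := fun z hz h => hY hz (Or.inr h)
  obtain ⟨c, hc, hcc⟩ := log_unique (isPreconnected_connectedComponentIn (x := p) (F := (R ∪ B)ᶜ))
    (c₁.mono hYR) (c₂.mono hYB) (fun z hz => by rw [e₁ z (hYR hz), e₂ z (hYB hz)])
  have hlog : HasLog (fun z => (z - r₁) / (z - r₂)) (connectedComponentIn Rᶜ p ∪ Bᶜ) := by
    refine ⟨fun z => if z ∈ B then g₁ z else g₂ z + c, ?_, ?_⟩
    · apply ContinuousOn.union_of_isOpen _ _ hR.isClosed.isOpen_compl.connectedComponentIn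
        hB.isClosed.isOpen_compl
      · refine (c₁.mono hWR).congr fun z hz => ?_
        by_cases hzB : z ∈ B
        · simp [hzB]
        · simp [hzB, hcc z (hcon z hz hzB)]
      · refine (c₂.add continuousOn_const).congr (f := fun z => g₂ z + c) fun z hz => ?_
        exact if_neg hz
    · intro z hz
      by_cases hzB : z ∈ B
      · have : z ∈ connectedComponentIn Rᶜ p := hz.resolve_right (fun h => h hzB)
        simpa [hzB] using e₁ z (hWR this)
      · simpa [hzB, Complex.exp_add, hc] using e₂ z hzB
  have hd : 0 < dist r₂ r₁ := dist_pos.2 hne.symm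
  set ρ := dist r₂ r₁ / 2 with hρ
  have hsub : Metric.sphere r₁ ρ ⊆ connectedComponentIn Rᶜ p ∪ Bᶜ := by
    intro z hz
    by_cases hzB : z ∈ B
    · left
      apply hW z hzB
      · rintro rfl
        simp at hz
        linarith
      · rintro rfl
        rw [Metric.mem_sphere] at hz
        linarith
    · exact Or.inr hzB
  have h1 : r₁ ∉ Metric.sphere r₁ ρ := by
    simp; linarith
  have h2 : r₂ ∉ Metric.sphere r₁ ρ := by
    rw [Metric.mem_sphere]; intro h; linarith
  have hcomp := comp_of_hasLog (isCompact_sphere r₁ ρ) h1 h2 (hlog.mono hsub)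
  have hpre := (isPreconnected_connectedComponentIn (x := r₁) (F := (Metric.sphere r₁ ρ)ᶜ))
  obtain ⟨z, hz, hzr⟩ := hpre.intermediate_value (mem_connectedComponentIn h1) hcomp
    (f := fun z => dist z r₁) (by fun_prop) (show ρ ∈ Icc _ _ by
      simp only [dist_self, mem_Icc]
      constructor <;> linarith)
  exact connectedComponentIn_subset _ _ hz hzr

/-- One half of the theta argument. -/
lemma theta_half {R A₁ A₂ A₃ U : Set ℂ} {u r₁ r₂ r₃ p d : ℂ}
    (hR : IsCompact R) (hu : u ∉ R)
    (h₁ : IsArc A₁ u r₁) (h₂ : IsArc A₂ u r₂) (h₃ : IsArc A₃ u r₃)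
    (hr₁ : A₁ ∩ R = {r₁}) (hr₂ : A₂ ∩ R = {r₂}) (hr₃ : A₃ ∩ R = {r₃})
    (h12 : A₁ ∩ A₂ = {u}) (h13 : A₁ ∩ A₃ = {u}) (h23 : A₂ ∩ A₃ = {u})
    (hU : IsPreconnected U) (hUR : Disjoint U R) (hU1 : Disjoint U A₁) (hU2 : Disjoint U A₂)
    (hU3 : Disjoint U A₃) (hc1 : A₁ ⊆ closure U) (hc3 : A₃ ⊆ closure U)
    (hp : p ∈ U) (hdW : d ∈ connectedComponentIn Rᶜ p) (hdB : d ∉ A₁ ∪ A₂)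
    (hd : d ∉ connectedComponentIn (R ∪ (A₁ ∪ A₂))ᶜ p) :
    HasLog (fun z => (z - d) / (z - p)) (R ∪ A₂ ∪ A₃) := by
  rw [disjoint_left] at hUR hU1 hU2 hU3
  have hdR : d ∉ R := connectedComponentIn_subset _ _ hdW
  have hdD : d ∈ (R ∪ (A₁ ∪ A₂))ᶜ := by
    rintro (h | h)
    exacts [hdR h, hdB h]
  have hpR : p ∉ R := hUR hp
  have hpA2 : p ∉ A₂ := hU2 hp
  have hDsub : connectedComponentIn (R ∪ (A₁ ∪ A₂))ᶜ d ⊆ (R ∪ (A₁ ∪ A₂))ᶜ :=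
    connectedComponentIn_subset _ _
  -- the component of `d` touches `A₁`
  have hex : ∃ a ∈ A₁, a ∉ R ∧ a ≠ u ∧ a ∈ closure (connectedComponentIn (R ∪ (A₁ ∪ A₂))ᶜ d) := by
    by_contra! hcon
    have hlog : HasLog (fun z => (z - d) / (z - p)) (R ∪ A₂) := by
      refine HasLog.union hR.isClosed h₂.compact.isClosed ?_ (hasLog_of_comp hR.isClosed hdW)
        (h₂.hasLog ?_ ?_)
      · rw [inter_comm, hr₂]; exact isPreconnected_singleton
      · refine ContinuousOn.div (by fun_prop) (by fun_prop) fun z hz h => ?_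
        exact hpA2 (sub_eq_zero.1 h ▸ hz)
      · refine fun z hz => div_ne_zero (fun h => ?_) (fun h => ?_)
        · exact hdB (Or.inr (sub_eq_zero.1 h ▸ hz))
        · exact hpA2 (sub_eq_zero.1 h ▸ hz)
    have hdK : d ∉ R ∪ A₂ := by
      rintro (h | h)
      exacts [hdR h, hdB (Or.inr h)]
    have hpZ := comp_of_hasLog (hR.union h₂.compact) hdK
      (by rintro (h | h); exacts [hpR h, hpA2 h]) hlog
    have hsub : connectedComponentIn (R ∪ A₂)ᶜ d ⊆ connectedComponentIn (R ∪ (A₁ ∪ A₂))ᶜ d := by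
      apply isPreconnected_connectedComponentIn.subset_of_closure_inter_subset
      · exact (hR.union (h₁.compact.union h₂.compact)).isClosed.isOpen_compl.connectedComponentIn
      · exact ⟨d, mem_connectedComponentIn hdK, mem_connectedComponentIn hdD⟩
      · rintro z ⟨hz, hz'⟩
        by_contra hzD
        have hzK := frontier_comp hdD hz hzD
        have hzn : z ∉ R ∪ A₂ := connectedComponentIn_subset _ _ hz'
        have hz1 : z ∈ A₁ := by
          rcases hzK with h | h | h
          exacts [absurd (Or.inl h) hzn, h, absurd (Or.inr h) hzn]
        refine hcon z hz1 (fun h => hzn (Or.inl h)) ?_ hz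
        rintro rfl
        exact hzn (Or.inr h₂.left_mem)
    exact hd (comp_symm (hsub hpZ))
  obtain ⟨a, ha1, haR, hau, hacl⟩ := hex
  have haK : a ∉ R ∪ A₂ ∪ A₃ := by
    rintro ((h | h) | h)
    · exact haR h
    · exact hau (h12.subset ⟨ha1, h⟩)
    · exact hau (h13.subset ⟨ha1, h⟩)
  have hUB : U ⊆ (R ∪ (A₁ ∪ A₂))ᶜ := by
    rintro z hz (h | h | h)
    exacts [hUR hz h, hU1 hz h, hU2 hz h]
  have hDK : connectedComponentIn (R ∪ (A₁ ∪ A₂))ᶜ d ⊆ (R ∪ A₂ ∪ A₃)ᶜ := by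
    rintro z hz ((h | h) | h)
    · exact hDsub hz (Or.inl h)
    · exact hDsub hz (Or.inr (Or.inr h))
    · have := closure_comp hU hUB hp (hc3 h) (hDsub hz)
      rw [connectedComponentIn_eq this, ← connectedComponentIn_eq hz] at hd
      exact hd (mem_connectedComponentIn hdD)
  have k1 := closure_comp isPreconnected_connectedComponentIn hDK
    (mem_connectedComponentIn hdD) hacl haK
  have hUK : U ⊆ (R ∪ A₂ ∪ A₃)ᶜ := by
    rintro z hz ((h | h) | h)
    exacts [hUR hz h, hU2 hz h, hU3 hz h]
  have k2 := closure_comp hU hUK hp (hc1 ha1) haK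
  apply hasLog_of_comp ((hR.union h₂.compact).union h₃.compact).isClosed
  rw [connectedComponentIn_eq k2, ← connectedComponentIn_eq k1]
  exact mem_connectedComponentIn (hDK (mem_connectedComponentIn hdD))

/-- No theta-like configuration lies on the boundary of one connected set. -/
theorem no_theta {R A₁ A₂ A₃ U : Set ℂ} {u r₁ r₂ r₃ : ℂ}
    (hR : IsCompact R) (hRp : IsPathConnected R) (hu : u ∉ R)
    (h₁ : IsArc A₁ u r₁) (h₂ : IsArc A₂ u r₂) (h₃ : IsArc A₃ u r₃)
    (hr₁ : A₁ ∩ R = {r₁}) (hr₂ : A₂ ∩ R = {r₂}) (hr₃ : A₃ ∩ R = {r₃})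
    (h12 : A₁ ∩ A₂ = {u}) (h13 : A₁ ∩ A₃ = {u}) (h23 : A₂ ∩ A₃ = {u})
    (hU : IsPreconnected U) (hUR : Disjoint U R) (hU1 : Disjoint U A₁) (hU2 : Disjoint U A₂)
    (hU3 : Disjoint U A₃) (hc1 : A₁ ⊆ closure U) (hc2 : A₂ ⊆ closure U)
    (hc3 : A₃ ⊆ closure U) : False := by
  obtain ⟨p, hp⟩ : U.Nonempty := closure_nonempty_iff.1 ⟨u, hc1 h₁.left_mem⟩
  have hr1R : r₁ ∈ A₁ ∩ R := hr₁ ▸ rfl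
  have hr2R : r₂ ∈ A₂ ∩ R := hr₂ ▸ rfl
  have hne : r₁ ≠ r₂ := by
    intro h
    have : r₁ = u := h12.subset ⟨hr1R.1, h ▸ hr2R.1⟩
    exact hu (this ▸ hr1R.2)
  have hURc : U ⊆ Rᶜ := fun z hz h => disjoint_left.1 hUR hz h
  obtain ⟨d, hdW, hdB, hd⟩ := jordan_sep (p := p) hR hRp (h₁.compact.union h₂.compact)
    (h₁.pathConn.union h₂.pathConn ⟨u, h₁.left_mem, h₂.left_mem⟩) hne hr1R.2 hr2R.2
    (Or.inl hr1R.1) (Or.inr hr2R.1) (by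
      intro z hz hz1 hz2
      refine closure_comp hU hURc hp (hz.elim (fun h => hc1 h) (fun h => hc2 h)) fun hzR => ?_
      rcases hz with h | h
      · exact hz1 (hr₁.subset ⟨h, hzR⟩)
      · exact hz2 (hr₂.subset ⟨h, hzR⟩))
  have l1 := theta_half hR hu h₁ h₂ h₃ hr₁ hr₂ hr₃ h12 h13 h23 hU hUR hU1 hU2 hU3 hc1 hc3 hp
    hdW hdB hd
  have l2 := theta_half hR hu h₂ h₁ h₃ hr₂ hr₁ hr₃ (inter_comm A₁ A₂ ▸ h12) h23 h13 hU hUR hU2 hU1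
    hU3 hc2 hc3 hp hdW (union_comm A₁ A₂ ▸ hdB) (union_comm A₁ A₂ ▸ hd)
  have hInter : (R ∪ A₂ ∪ A₃) ∩ (R ∪ A₁ ∪ A₃) = R ∪ A₃ := by
    ext z
    constructor
    · rintro ⟨(h | h) | h, (h' | h') | h'⟩
      · exact Or.inl h
      · exact Or.inl h
      · exact Or.inl h
      · exact Or.inl h'
      · have : z = u := h12.subset ⟨h', h⟩
        exact Or.inr (this ▸ h₃.left_mem)
      all_goals first | exact Or.inr h' | exact Or.inr h
    · rintro (h | h)
      · exact ⟨Or.inl (Or.inl h), Or.inl (Or.inl h)⟩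
      · exact ⟨Or.inr h, Or.inr h⟩
  have hr3R : r₃ ∈ A₃ ∩ R := hr₃ ▸ rfl
  have l3 := HasLog.union ((hR.union h₂.compact).union h₃.compact).isClosed
    ((hR.union h₁.compact).union h₃.compact).isClosed
    (hInter ▸ (hRp.union h₃.pathConn ⟨r₃, hr3R.2, hr3R.1⟩).isConnected.isPreconnected) l1 l2
  have l4 : HasLog (fun z => (z - d) / (z - p)) (R ∪ (A₁ ∪ A₂)) := l3.mono (by
    rintro z (h | h | h)
    · exact Or.inl (Or.inl (Or.inl h))
    · exact Or.inr (Or.inl (Or.inr h))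
    · exact Or.inl (Or.inl (Or.inr h)))
  refine hd (comp_symm (comp_of_hasLog (hR.union (h₁.compact.union h₂.compact)) ?_ ?_ l4))
  · rintro (h | h)
    · exact connectedComponentIn_subset _ _ hdW h
    · exact hdB h
  · rintro (h | h | h)
    exacts [disjoint_left.1 hUR hp h, disjoint_left.1 hU1 hp h, disjoint_left.1 hU2 hp h]

end ThetaTop

namespace ThetaTop

open Set

/-- The identification of `ℝ × ℝ` with the complex plane. -/
noncomputable def toC : ℝ × ℝ ≃ₜ ℂ := Complex.equivRealProdCLM.symm.toHomeomorph

variable {V : Type u}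

lemma arc_isArc (G : PlaneGraph V) {a b : V} (h : G.Adj a b) :
    IsArc (toC '' G.arc s(a, b)) (toC (G.pos a)) (toC (G.pos b)) := by
  obtain ⟨f, hf, hi, him, h0, h1⟩ := G.arc_arc a b h
  refine ⟨fun t => toC (f t), toC.continuous.comp_continuousOn hf,
    fun s hs t ht hst => hi hs ht (toC.injective hst), ?_, by simp [h0], by simp [h1]⟩
  rw [← him, image_image]

lemma pos_left_mem (G : PlaneGraph V) {a b : V} (h : G.Adj a b) : G.pos a ∈ G.arc s(a, b) := by
  obtain ⟨f, hf, hi, him, h0, h1⟩ := G.arc_arc a b h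
  rw [← him, ← h0]
  exact ⟨0, by simp, rfl⟩

lemma adj_finite (G : PlaneGraph V) : {q : V × V | G.Adj q.1 q.2}.Finite :=
  (G.finite_verts.prod G.finite_verts).subset fun q hq =>
    ⟨G.adj_mem _ _ hq, G.adj_mem _ _ (G.adj_symm _ _ hq)⟩

lemma image_compact (G : PlaneGraph V) : IsCompact (toC '' G.image) := by
  have h : toC '' G.image = toC '' (G.pos '' G.verts) ∪
      ⋃ q ∈ {q : V × V | G.Adj q.1 q.2}, toC '' G.arc s(q.1, q.2) := by
    rw [PlaneGraph.image, image_union]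
    congr 1
    ext z
    simp only [mem_image, mem_iUnion, mem_ofPred_eq, Prod.exists]
    constructor
    · rintro ⟨w1, w2, ⟨a, b, h, hw⟩, rfl⟩
      exact ⟨a, b, h, w1, w2, hw, rfl⟩
    · rintro ⟨a, b, h, w1, w2, hw, rfl⟩
      exact ⟨w1, w2, ⟨a, b, h, hw⟩, rfl⟩
  rw [h]
  refine ((G.finite_verts.image _).image _).isCompact.union ?_
  exact (adj_finite G).isCompact_biUnion fun q hq => (arc_isArc G hq).compact

lemma outer_preconn (G : PlaneGraph V) : IsPreconnected (toC '' G.outerFace) := by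
  refine IsPreconnected.image ?_ _ toC.continuous.continuousOn
  apply isPreconnected_of_forall_pair
  intro p hp q hq
  refine ⟨connectedComponentIn G.imageᶜ p, ?_, mem_connectedComponentIn hp.1, ?_,
    isPreconnected_connectedComponentIn⟩
  · intro z hz
    refine ⟨connectedComponentIn_subset _ _ hz, ?_⟩
    rw [← connectedComponentIn_eq hz]
    exact hp.2
  · have key : ∀ x ∈ G.outerFace,
        toC '' connectedComponentIn G.imageᶜ x = connectedComponentIn (toC '' G.image)ᶜ (toC x) ∧
        ¬ Bornology.IsBounded (connectedComponentIn (toC '' G.image)ᶜ (toC x)) := by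
      intro x hx
      have h1 : toC '' connectedComponentIn G.imageᶜ x
          = connectedComponentIn (toC '' G.image)ᶜ (toC x) := by
        rw [toC.image_connectedComponentIn hx.1, image_compl_eq toC.bijective]
      refine ⟨h1, fun hb => hx.2 ?_⟩
      rw [← h1] at hb
      have := (hb.closure.isCompact_closure).image toC.symm.continuous
      refine this.isBounded.subset fun z hz => ?_
      exact ⟨toC z, subset_closure (subset_closure ⟨z, hz, rfl⟩), by simp⟩
    have := unbounded_comp (image_compact G) (key p hp).2 (key q hq).2
    rw [← (key p hp).1] at this
    obtain ⟨w, hw, hwq⟩ := this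
    exact toC.injective hwq ▸ hw

/-- The part of the drawing of `G - u` reachable from `y`. -/
def reachPart (G : PlaneGraph V) (u y : V) : Set ℂ :=
  {toC (G.pos y)} ∪ ⋃ q ∈ {q : V × V | G.Adj q.1 q.2 ∧ q.1 ≠ u ∧ q.2 ≠ u ∧
    Relation.ReflTransGen (fun a b => G.Adj a b ∧ a ≠ u ∧ b ≠ u) y q.1}, toC '' G.arc s(q.1, q.2)

lemma reachPart_compact (G : PlaneGraph V) (u y : V) : IsCompact (reachPart G u y) := by
  refine isCompact_singleton.union ?_
  refine ((adj_finite G).subset fun q hq => hq.1).isCompact_biUnion fun q hq =>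
    (arc_isArc G hq.1).compact

lemma reachPart_arc (G : PlaneGraph V) {u y a b : V} (h : G.Adj a b) (ha : a ≠ u) (hb : b ≠ u)
    (hr : Relation.ReflTransGen (fun a b => G.Adj a b ∧ a ≠ u ∧ b ≠ u) y a) :
    toC '' G.arc s(a, b) ⊆ reachPart G u y := fun z hz =>
  Or.inr (mem_biUnion (x := (a, b)) ⟨h, ha, hb, hr⟩ hz)

lemma reachPart_joined (G : PlaneGraph V) {u y a : V}
    (hr : Relation.ReflTransGen (fun a b => G.Adj a b ∧ a ≠ u ∧ b ≠ u) y a) :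
    JoinedIn (reachPart G u y) (toC (G.pos y)) (toC (G.pos a)) := by
  induction hr with
  | refl => exact JoinedIn.refl (Or.inl rfl)
  | @tail b c hb hbc ih =>
    have hA := arc_isArc G hbc.1
    exact ih.trans ((hA.pathConn.joinedIn _ hA.left_mem _ hA.right_mem).mono
      (reachPart_arc G hbc.1 hbc.2.1 hbc.2.2 hb))

lemma reachPart_pathConn (G : PlaneGraph V) (u y : V) : IsPathConnected (reachPart G u y) := by
  refine ⟨toC (G.pos y), Or.inl rfl, ?_⟩
  rintro z (rfl | hz)
  · exact JoinedIn.refl (Or.inl rfl)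
  · simp only [mem_iUnion] at hz
    obtain ⟨⟨a, b⟩, ⟨h, ha, hb, hr⟩, hz⟩ := hz
    have hA := arc_isArc G h
    exact (reachPart_joined G hr).trans ((hA.pathConn.joinedIn _ hA.left_mem _ hz).mono
      (reachPart_arc G h ha hb hr))

lemma reachPart_sub (G : PlaneGraph V) {u y : V} (hy : y ∈ G.verts) :
    reachPart G u y ⊆ toC '' G.image := by
  rintro z (rfl | hz)
  · exact ⟨_, Or.inl ⟨y, hy, rfl⟩, rfl⟩
  · simp only [mem_iUnion] at hz
    obtain ⟨⟨a, b⟩, ⟨h, ha, hb, hr⟩, w, hw, rfl⟩ := hz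
    exact ⟨w, Or.inr (by simp only [mem_iUnion]; exact ⟨a, b, h, hw⟩), rfl⟩

lemma pos_notMem_reachPart (G : PlaneGraph V) {u y : V} (hu : u ∈ G.verts) (hy : y ∈ G.verts)
    (hyu : y ≠ u) : toC (G.pos u) ∉ reachPart G u y := by
  rintro (h | hz)
  · exact hyu (G.pos_injOn hy hu (toC.injective h).symm)
  · simp only [mem_iUnion] at hz
    obtain ⟨⟨a, b⟩, ⟨h, ha, hb, hr⟩, w, hw, hwu⟩ := hz
    have := toC.injective hwu
    subst this
    rcases G.arc_avoid a b h u hu hw with h' | h'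
    · exact ha h'.symm
    · exact hb h'.symm

lemma arc_inter_reachPart (G : PlaneGraph V) {u y a : V} (hy : y ∈ G.verts)
    (hyu : y ≠ u) (hua : G.Adj u a)
    (hr : Relation.ReflTransGen (fun a b => G.Adj a b ∧ a ≠ u ∧ b ≠ u) y a) :
    toC '' G.arc s(u, a) ∩ reachPart G u y = {toC (G.pos a)} := by
  apply Subset.antisymm
  · rintro _ ⟨⟨w, hw, rfl⟩, h | hz⟩
    · have := toC.injective h
      subst this
      rcases G.arc_avoid u a hua y hy hw with h' | h'
      · exact absurd h' hyu
      · simp [h']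
    · simp only [mem_iUnion] at hz
      obtain ⟨⟨b, c⟩, ⟨h, hb, hc, hr⟩, w', hw', hww⟩ := hz
      have := toC.injective hww
      subst this
      obtain ⟨v, ⟨hv1, hv2⟩, rfl⟩ := G.arc_meet u a b c hua h (by
        intro he
        rw [Sym2.eq_iff] at he
        rcases he with ⟨rfl, rfl⟩ | ⟨rfl, rfl⟩
        · exact hb rfl
        · exact hc rfl) ⟨hw, hw'⟩
      simp only [mem_insert_iff, mem_singleton_iff] at hv1 hv2
      rcases hv1 with rfl | rfl
      · rcases hv2 with rfl | rfl
        · exact absurd rfl hb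
        · exact absurd rfl hc
      · rfl
  · rintro _ rfl
    exact ⟨(arc_isArc G hua).right_mem, (reachPart_joined G hr).mem.2⟩

lemma arc_inter_arc (G : PlaneGraph V) {u a b : V} (hua : G.Adj u a) (hub : G.Adj u b)
    (hab : a ≠ b) : toC '' G.arc s(u, a) ∩ toC '' G.arc s(u, b) = {toC (G.pos u)} := by
  apply Subset.antisymm
  · rintro _ ⟨⟨w, hw, rfl⟩, w', hw', hww⟩
    have := toC.injective hww
    subst this
    obtain ⟨v, ⟨hv1, hv2⟩, rfl⟩ := G.arc_meet u a u b hua hub (by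
      intro he
      rw [Sym2.eq_iff] at he
      rcases he with ⟨-, h⟩ | ⟨rfl, rfl⟩
      · exact hab h
      · exact hab rfl) ⟨hw, hw'⟩
    simp only [mem_insert_iff, mem_singleton_iff] at hv1 hv2
    rcases hv1 with rfl | rfl
    · rfl
    · rcases hv2 with rfl | rfl
      · rfl
      · exact absurd rfl hab
  · rintro _ rfl
    exact ⟨(arc_isArc G hua).left_mem, (arc_isArc G hub).left_mem⟩

lemma outer_of_edge (G : PlaneGraph V) {a b : V} (h : G.Adj a b) (ho : G.EdgeOnOuter a b) :
    a ∈ G.boundaryVerts := ⟨G.adj_mem _ _ h, ho (pos_left_mem G h)⟩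

lemma edgeOnOuter_symm (G : PlaneGraph V) {a b : V} (ho : G.EdgeOnOuter a b) :
    G.EdgeOnOuter b a := by
  unfold PlaneGraph.EdgeOnOuter at *
  rwa [Sym2.eq_swap]

/-- A non-cutvertex of the outer boundary has at most two boundary edges. -/
theorem no_three (G : PlaneGraph V) {u a b c : V} (hcut : ¬ BoundaryCutvertex G u)
    (ha : G.Adj u a) (hb : G.Adj u b) (hc : G.Adj u c)
    (hao : G.EdgeOnOuter u a) (hbo : G.EdgeOnOuter u b) (hco : G.EdgeOnOuter u c)
    (hab : a ≠ b) (hac : a ≠ c) (hbc : b ≠ c) : False := by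
  have hne : ∀ w, G.Adj u w → w ≠ u := by
    rintro w hw rfl
    exact G.adj_irrefl _ hw
  have hbd : ∀ w, G.Adj u w → G.EdgeOnOuter u w → w ∈ G.boundaryVerts := fun w hw ho =>
    outer_of_edge G (G.adj_symm _ _ hw) (edgeOnOuter_symm G ho)
  have reach : ∀ w, G.Adj u w → G.EdgeOnOuter u w →
      Relation.ReflTransGen (fun a b => G.Adj a b ∧ a ≠ u ∧ b ≠ u) a w := by
    intro w hw ho
    by_contra hcon
    refine hcut ⟨a, w, hbd a ha hao, hbd w hw ho, hne a ha, hne w hw, ?_, ?_⟩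
    · exact (Relation.ReflTransGen.single ⟨G.adj_symm _ _ ha, edgeOnOuter_symm G hao⟩).tail
        ⟨hw, ho⟩
    · intro h
      refine hcon (Relation.ReflTransGen.mono ?_ _ _ h)
      exact fun x y hxy => ⟨hxy.1, hxy.2.2.1, hxy.2.2.2⟩
  have hav : a ∈ G.verts := (hbd a ha hao).1
  have huv : u ∈ G.verts := G.adj_mem _ _ ha
  have hcl : ∀ w, G.EdgeOnOuter u w → toC '' G.arc s(u, w) ⊆ closure (toC '' G.outerFace) := by
    intro w ho
    rw [← toC.image_closure]
    exact image_mono (ho.trans frontier_subset_closure)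
  have hdisj : Disjoint (toC '' G.outerFace) (toC '' G.image) := by
    rw [disjoint_left]
    rintro _ ⟨z, hz, rfl⟩ ⟨w, hw, hwz⟩
    exact hz.1 (toC.injective hwz ▸ hw)
  have harc : ∀ w, G.Adj u w → Disjoint (toC '' G.outerFace) (toC '' G.arc s(u, w)) := by
    intro w hw
    refine hdisj.mono_right (image_mono fun z hz => Or.inr ?_)
    simp only [mem_iUnion]
    exact ⟨u, w, hw, hz⟩
  exact no_theta (reachPart_compact G u a) (reachPart_pathConn G u a)
    (pos_notMem_reachPart G huv hav (hne a ha))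
    (arc_isArc G ha) (arc_isArc G hb) (arc_isArc G hc)
    (arc_inter_reachPart G hav (hne a ha) ha (reach a ha hao))
    (arc_inter_reachPart G hav (hne a ha) hb (reach b hb hbo))
    (arc_inter_reachPart G hav (hne a ha) hc (reach c hc hco))
    (arc_inter_arc G ha hb hab) (arc_inter_arc G ha hc hac) (arc_inter_arc G hb hc hbc)
    (outer_preconn G) (hdisj.mono_right (reachPart_sub G hav))
    (harc a ha) (harc b hb) (harc c hc) (hcl a hao) (hcl b hbo) (hcl c hco)

end ThetaTop

/-- Proposition 3.5(2): if `T(P, L0, x) = (G', S', L')` is a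
democratic reduction of a canvas `T = (G, S, L)` and `φ` is an `L'`-coloring of
`G'`, then `φ` can be extended to an `L`-coloring of `G`. (The path `P` is
given by the list `Q`.) -/
theorem democratic_reduction_extends {V : Type u} (G : PlaneGraph V)
    (Sverts : Set V) (SAdj : V → V → Prop) (L : V → Finset ℕ)
    (L0 : Finset ℕ) (Q : List V) (x y : V)
    (hT : IsCanvas G Sverts SAdj L)
    (hL0card : L0.card = 2)
    (hQne : Q ≠ [])
    (hQnodup : Q.Nodup)
    (hQverts : ∀ v ∈ Q, v ∈ G.verts)
    -- `Q` is a path in the boundary `C` of the outer face: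
    (hQchain : List.Chain' (fun a b => G.Adj a b ∧ G.EdgeOnOuter a b) Q)
    (hQouter : ∀ v ∈ Q, G.OnOuter v)
    -- `Q` is induced in `C`:
    (hQinduced : ∀ i j : Fin Q.length, (i : ℕ) + 1 < (j : ℕ) →
      ¬(G.Adj (Q.get i) (Q.get j) ∧ G.EdgeOnOuter (Q.get i) (Q.get j)))
    -- no vertex of `Q` is the end of a chord of `C`:
    (hNoChord : ∀ v ∈ Q, ¬∃ w ∈ G.boundaryVerts, G.Adj v w ∧ ¬G.EdgeOnOuter v w)
    -- no vertex of `Q` is a cutvertex of `C`: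
    (hNoCut : ∀ v ∈ Q, ¬BoundaryCutvertex G v)
    (hVC : G.boundaryVerts ≠ {v | v ∈ Q})
    (hQL0 : ∀ v ∈ Q, L0 ⊆ L v)
    -- `x` is the neighbor of the first vertex of `Q` on `C` outside `Q`,
    -- `y` is the neighbor of the last vertex of `Q` on `C` outside `Q`:
    (hx : G.Adj x (Q.head hQne) ∧ G.EdgeOnOuter x (Q.head hQne) ∧ x ∉ Q)
    (hy : G.Adj y (Q.getLast hQne) ∧ G.EdgeOnOuter y (Q.getLast hQne) ∧ y ∉ Q)
    (hxy : Q.length = 1 → x ≠ y)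
    (hLx : (L x \ L0).Nonempty)
    (φ : V → ℕ)
    (hφmem : ∀ v ∈ (G.deleteVerts {v | v ∈ Q}).verts, φ v ∈ reducedL G L L0 Q x y v)
    (hφproper : ∀ u v, (G.deleteVerts {v | v ∈ Q}).Adj u v → φ u ≠ φ v) :
    ∃ ψ : V → ℕ, (∀ v ∈ G.verts, ψ v ∈ L v) ∧ (∀ u v, G.Adj u v → ψ u ≠ ψ v) ∧
      ∀ v ∈ (G.deleteVerts {v | v ∈ Q}).verts, ψ v = φ v := by
  classical
  have hlen : 0 < Q.length := List.length_pos_iff.2 hQne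
  obtain ⟨α, β, hαβ, hL0⟩ := Finset.card_eq_two.1 hL0card
  -- the colour of the last vertex of the path avoids the colour of `y`
  obtain ⟨s, t, hst, hsL, htL, hsy⟩ : ∃ s t, s ≠ t ∧ s ∈ L0 ∧ t ∈ L0 ∧ s ≠ φ y := by
    by_cases h : α = φ y
    · exact ⟨β, α, hαβ.symm, by simp [hL0], by simp [hL0], h ▸ hαβ.symm⟩
    · exact ⟨α, β, hαβ, by simp [hL0], by simp [hL0], h⟩
  have hinj : ∀ (i j : ℕ) (hi : i < Q.length) (hj : j < Q.length), Q[i] = Q[j] → i = j :=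
    fun i j hi hj h => (List.Nodup.getElem_inj_iff hQnodup).1 h
  have hcons : ∀ (i : ℕ) (hi : i + 1 < Q.length),
      G.Adj Q[i] Q[i+1] ∧ G.EdgeOnOuter Q[i] Q[i+1] := fun i hi =>
    List.isChain_iff_getElem.1 hQchain i hi
  have hhead : Q.head hQne = Q[0] := List.head_eq_getElem hQne
  have hlast : Q.getLast hQne = Q[Q.length - 1] := List.getLast_eq_getElem hQne
  have hbd : ∀ v ∈ Q, v ∈ G.boundaryVerts := fun v hv => ⟨hQverts v hv, hQouter v hv⟩
  have hyv : y ∈ G.verts := G.adj_mem _ _ hy.1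
  have hyb : y ∈ G.boundaryVerts := ThetaTop.outer_of_edge G hy.1 hy.2.1
  -- adjacency inside the path
  have hadjQ : ∀ (i j : ℕ) (hi : i < Q.length) (hj : j < Q.length), i < j →
      G.Adj Q[i] Q[j] → j = i + 1 := by
    intro i j hi hj hij hadj
    by_contra hne
    have hno := hQinduced ⟨i, hi⟩ ⟨j, hj⟩ (by simp only; omega)
    simp only [List.get_eq_getElem] at hno
    refine hNoChord Q[i] (List.getElem_mem hi) ⟨Q[j], hbd _ (List.getElem_mem hj), hadj, ?_⟩
    exact fun h => hno ⟨hadj, h⟩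
  -- the colour of `y`
  have hyQ : ∀ (i : ℕ) (hi : i < Q.length), G.Adj Q[i] y → φ y ∈ L0 → i + 1 = Q.length := by
    intro i hi hadj hφy
    by_contra hne
    have hi1 : i + 1 < Q.length := by omega
    have hyx : y ≠ x := by
      rintro rfl
      have := hφmem y ⟨hyv, hy.2.2⟩
      simp only [reducedL, true_or, if_true, Finset.mem_sdiff] at this
      exact this.2 hφy
    have hyo : G.EdgeOnOuter Q[i] y := by
      by_contra h
      exact hNoChord Q[i] (List.getElem_mem hi) ⟨y, hyb, hadj, h⟩
    have hcut := hNoCut Q[i] (List.getElem_mem hi)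
    have hc1 := hcons i hi1
    have hyn : Q[i+1] ≠ y := fun h => hy.2.2 (h ▸ List.getElem_mem hi1)
    rcases Nat.eq_zero_or_pos i with rfl | hipos
    · rw [hhead] at hx
      refine ThetaTop.no_three G hcut hadj hc1.1 (G.adj_symm _ _ hx.1) hyo hc1.2
        (ThetaTop.edgeOnOuter_symm G hx.2.1) hyn.symm hyx ?_
      exact fun h => hx.2.2 (h ▸ List.getElem_mem hi1)
    · obtain ⟨j, rfl⟩ : ∃ j, i = j + 1 := ⟨i - 1, by omega⟩
      have hc0 := hcons j hi
      refine ThetaTop.no_three G hcut hadj hc1.1 (G.adj_symm _ _ hc0.1) hyo hc1.2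
        (ThetaTop.edgeOnOuter_symm G hc0.2) hyn.symm ?_ ?_
      · exact fun h => hy.2.2 (h ▸ List.getElem_mem _)
      · intro h
        have := hinj _ _ _ _ h
        omega
  -- the extension
  let col : ℕ → ℕ := fun i => if (Q.length - 1 - i) % 2 = 0 then s else t
  have hcolL : ∀ i, col i ∈ L0 := fun i => by
    simp only [col]; split_ifs <;> assumption
  have hcolne : ∀ i, i + 1 < Q.length → col i ≠ col (i + 1) := by
    intro i hi
    simp only [col]
    have : Q.length - 1 - i = (Q.length - 1 - (i + 1)) + 1 := by omega
    rw [this]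
    split_ifs with h1 h2 h2
    · omega
    · exact hst
    · exact hst.symm
    · omega
  let ψ : V → ℕ := fun v => if v ∈ Q then col (Q.idxOf v) else φ v
  have hψQ : ∀ (i : ℕ) (hi : i < Q.length), ψ Q[i] = col i := by
    intro i hi
    simp only [ψ, List.getElem_mem, if_true]
    rw [hQnodup.idxOf_getElem]
  have hψn : ∀ v, v ∉ Q → ψ v = φ v := fun v hv => by simp [ψ, hv]
  -- an edge with one end in the path
  have hmix : ∀ (i : ℕ) (hi : i < Q.length) (w : V), w ∉ Q → G.Adj Q[i] w → ψ Q[i] ≠ ψ w := by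
    intro i hi w hw hadj heq
    rw [hψQ, hψn w hw] at heq
    have hwL0 : φ w ∈ L0 := heq ▸ hcolL i
    by_cases hwy : w = y
    · subst hwy
      have hl := hyQ i hi hadj hwL0
      have : col i = s := by
        simp only [col]
        rw [if_pos]
        have : Q.length - 1 - i = 0 := by omega
        simp [this]
      exact hsy (this ▸ heq)
    · have hwv : w ∈ G.verts := G.adj_mem _ _ (G.adj_symm _ _ hadj)
      have := hφmem w ⟨hwv, hw⟩
      simp only [reducedL] at this
      rw [if_pos (Or.inr ⟨hwy, Q[i], List.getElem_mem hi, G.adj_symm _ _ hadj⟩)] at this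
      exact (Finset.mem_sdiff.1 this).2 hwL0
  refine ⟨ψ, ?_, ?_, fun v hv => hψn v hv.2⟩
  · intro v hv
    by_cases hvQ : v ∈ Q
    · obtain ⟨i, hi, rfl⟩ := List.getElem_of_mem hvQ
      rw [hψQ]
      exact hQL0 _ hvQ (hcolL i)
    · rw [hψn v hvQ]
      have := hφmem v ⟨hv, hvQ⟩
      simp only [reducedL] at this
      split_ifs at this
      · exact (Finset.mem_sdiff.1 this).1
      · exact this
  · intro v w hadj
    by_cases hvQ : v ∈ Q
    · obtain ⟨i, hi, rfl⟩ := List.getElem_of_mem hvQ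
      by_cases hwQ : w ∈ Q
      · obtain ⟨j, hj, rfl⟩ := List.getElem_of_mem hwQ
        rw [hψQ, hψQ]
        rcases lt_trichotomy i j with h | rfl | h
        · obtain rfl := hadjQ i j hi hj h hadj
          exact hcolne i hj
        · exact absurd hadj (G.adj_irrefl _)
        · obtain rfl := hadjQ j i hj hi h (G.adj_symm _ _ hadj)
          exact (hcolne j hi).symm
      · exact hmix i hi w hwQ hadj
    · by_cases hwQ : w ∈ Q
      · obtain ⟨j, hj, rfl⟩ := List.getElem_of_mem hwQ
        exact (hmix j hj v hvQ (G.adj_symm _ _ hadj)).symm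
      · rw [hψn v hvQ, hψn w hwQ]
        exact hφproper v w ⟨hadj, hvQ, hwQ⟩
end
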